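/- arXiv:1602.09025 — 4 statements merged into one kernel-verified Lean document; each statement's English description precedes it below -/
import Mathlib

section
/- Let φ : ℕ → ℝ be any function with φ(n) → 0 as n → ∞. Then there exists an integrable function f ∈ L¹(𝕋) such that for almost every x ∈ 𝕋 the estimate S_n f(x) − S_m f(x) = O(φ(|m − n|) log |m − n|) fails; that is, for almost every x there is no constant C such that |S_n f(x) − S_m f(x)| ≤ C φ(|m − n|) log |m − n| for all m, n with |m − n| ≥ 2. -/
/-!
Let `e(t) = exp (2πit)`. The function `f` is the real part of a sum of blocks
`2⁻ʲ e(M_j x) P_j(x)`, where `P_j` is a trigonometric polynomial with `‖P_j‖₁ ≤ 1` and the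
frequencies `M_j` place the blocks in disjoint bands. Inside the `j`-th band the increments of the partial sums of
`f` only see `P_j`, so blocks never interact.

A block of width `N` is a Fejér-smoothed average of `N` point masses placed near the points `-i/N`.
By Baire's theorem the positions of the masses can be chosen with a dense orbit in the torus,
so every choice of phases `c_i` is realised at some place in the spectrum of the block: there the
coefficients are close to those of `∑ c_i δ_{-i/N} / N`. The Dirichlet sum at `x + i / N` has size
`|1 - e(N x)| / |1 - e(x + i / N)|`, so the phases that align these sums produce a harmonic sum,
and a window of `N` consecutive terms of size at least `|1 - e(N x)| log N / (2π)`. The next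
window differs from it by the factor `e(N x)`, hence one of the two has a real part of size at
least `sin² (2πN x) log N / (6π)`, whatever the phase by which the band shift rotates them.

The set where `|sin (2πN x)| < τ_j` has measure at most `2⁻ʲ` for some `τ_j > 0` independent of
`N`. As `φ → 0`, the width `N_j` can be taken so large that off this set the `j`-th increment
exceeds `j |φ(N_j)| log N_j`, and by Borel–Cantelli almost every `x` lies in only finitely many of
these sets.
-/

open MeasureTheory Filter AddCircle
open scoped ENNReal

instance : Fact ((0:ℝ) < 1) := ⟨zero_lt_one⟩

/-- The `n`-th symmetric partial sum of the Fourier series of `f` on the circle `𝕋 = ℝ/ℤ`: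
`S_n f (x) = ∑_{|j| ≤ n} f̂(j) e^{2πijx}`. -/
noncomputable def fourierPartialSum (f : AddCircle (1:ℝ) → ℂ) (n : ℕ) (x : AddCircle (1:ℝ)) : ℂ :=
  ∑ j ∈ Finset.Icc (-(n:ℤ)) (n:ℤ), fourierCoeff f j * fourier j x

open scoped Topology ComplexConjugate BigOperators

section FourierCoefficients

variable {T : ℝ}

lemma norm_fourier_apply (n : ℤ) (x : AddCircle T) : ‖fourier n x‖ = 1 :=
  Circle.norm_coe _

lemma fourier_apply_add (n : ℤ) (x y : AddCircle T) :
    fourier n (x + y) = fourier n x * fourier n y := by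
  simp [toCircle_add]

lemma fourier_natCast_apply (n : ℕ) (x : AddCircle T) : fourier n x = fourier 1 x ^ n := by
  simp [toCircle_nsmul]

variable [Fact (0 < T)] {E : Type*} [NormedAddCommGroup E] [NormedSpace ℂ E]

lemma fourierCoeff_comp_sub_right (F : AddCircle T → E) (y : AddCircle T) (n : ℤ) :
    fourierCoeff (fun x ↦ F (x - y)) n = fourier (-n) y • fourierCoeff F n := by
  have shift := integral_sub_right_eq_self (μ := haarAddCircle)
    (fun t ↦ fourier (-n) (t + y) • F t) y
  simp only [sub_add_cancel] at shift
  simp only [fourierCoeff, shift, ← integral_smul, smul_smul, fourier_apply_add,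
    mul_comm (fourier (-n) y)]

lemma fourierCoeff_fourier_smul (F : AddCircle T → E) (m n : ℤ) :
    fourierCoeff (fun x ↦ fourier m x • F x) n = fourierCoeff F (n - m) := by
  simp only [fourierCoeff, smul_smul, ← fourier_add, neg_sub, neg_add_eq_sub]

lemma fourierCoeff_conj (f : AddCircle T → ℂ) (n : ℤ) :
    fourierCoeff (fun x ↦ conj (f x)) n = conj (fourierCoeff f (-n)) := by
  simp only [fourierCoeff, ← integral_conj, smul_eq_mul, map_mul, ← fourier_neg, neg_neg]

lemma fourierCoeff_ofReal_neg (f : AddCircle T → ℝ) (n : ℤ) :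
    fourierCoeff (fun x ↦ (f x : ℂ)) (-n) = conj (fourierCoeff (fun x ↦ (f x : ℂ)) n) := by
  simpa using fourierCoeff_conj (fun x ↦ (f x : ℂ)) (-n)

lemma fourierCoeff_re {g : AddCircle T → ℂ} (hg : Integrable g haarAddCircle) (n : ℤ) :
    fourierCoeff (fun x ↦ ((g x).re : ℂ)) n =
      2⁻¹ * (fourierCoeff g n + conj (fourierCoeff g (-n))) := by
  have hconj : Integrable (fun x ↦ conj (g x)) haarAddCircle :=
    Complex.conjCLE.toContinuousLinearMap.integrable_comp hg
  rw [← fourierCoeff_conj, ← Pi.add_apply, ← fourierCoeff.add hg hconj, ← fourierCoeff.const_mul]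
  simp [Complex.re_eq_add_conj, div_eq_inv_mul]

end FourierCoefficients

section SummableIntegrals

variable {α ι : Type*} [MeasurableSpace α] {μ : Measure α} [Countable ι]

lemma integrable_tsum_of_summable_integral_norm {F : ι → α → ℂ} (hF : ∀ i, Integrable (F i) μ)
    (hsum : Summable fun i ↦ ∫ a, ‖F i a‖ ∂μ) : Integrable (fun a ↦ ∑' i, F i a) μ := by
  refine ⟨(AEMeasurable.tsum fun i ↦ (hF i).aemeasurable).aestronglyMeasurable, ?_⟩
  calc ∫⁻ a, ‖∑' i, F i a‖ₑ ∂μ ≤ ∫⁻ a, ∑' i, ‖F i a‖ₑ ∂μ :=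
        lintegral_mono fun a ↦ enorm_tsum_le_tsum_enorm
    _ = ∑' i, ENNReal.ofReal (∫ a, ‖F i a‖ ∂μ) := by
        rw [lintegral_tsum fun i ↦ (hF i).aemeasurable.enorm]
        simp only [ofReal_integral_norm_eq_lintegral_enorm (hF _)]
    _ < ∞ := hsum.tsum_ofReal_lt_top

lemma hasSum_fourierCoeff_tsum {T : ℝ} [Fact (0 < T)] {E : Type*} [NormedAddCommGroup E]
    [NormedSpace ℂ E] {G : ι → AddCircle T → E} (hG : ∀ i, Integrable (G i) haarAddCircle)
    (hsum : Summable fun i ↦ ∫ x, ‖G i x‖ ∂haarAddCircle) (n : ℤ) :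
    HasSum (fun i ↦ fourierCoeff (G i) n) (fourierCoeff (fun x ↦ ∑' i, G i x) n) := by
  have key := hasSum_integral_of_summable_integral_norm (fun i ↦ (hG i).fourier_smul (-n))
    (by simpa only [norm_smul, norm_fourier_apply, one_mul] using hsum)
  simpa only [fourierCoeff, tsum_const_smul''] using key

end SummableIntegrals

section Fejer

variable {T : ℝ}

/-- The Fejér kernel `K_L` on `ℝ/Tℤ`, written as the squared modulus of a geometric sum so that it
is visibly nonnegative. Its only role is to turn a point mass into a trigonometric polynomial.
For `L = 0` it vanishes. -/
noncomputable def fejerKernel (L : ℕ) (x : AddCircle T) : ℝ :=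
  ‖∑ a ∈ Finset.range L, fourier a x‖ ^ 2 / L

lemma fejerKernel_nonneg (L : ℕ) (x : AddCircle T) : 0 ≤ fejerKernel L x := by
  unfold fejerKernel; positivity

lemma continuous_fejerKernel (L : ℕ) : Continuous (fejerKernel L : AddCircle T → ℝ) := by
  unfold fejerKernel; fun_prop

lemma ofReal_fejerKernel (L : ℕ) (x : AddCircle T) :
    (fejerKernel L x : ℂ) = (L : ℂ)⁻¹ *
      ∑ p ∈ Finset.range L ×ˢ Finset.range L, fourier ((p.1 : ℤ) - p.2) x := by
  simp_rw [fejerKernel, Complex.ofReal_div, Complex.ofReal_pow, ← Complex.mul_conj', map_sum,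
    Finset.sum_mul_sum, Finset.sum_product, sub_eq_add_neg, fourier_add, fourier_neg,
    Complex.ofReal_natCast, div_eq_inv_mul]

lemma card_range_product_filter_sub_eq (L : ℕ) (n : ℤ) :
    ((Finset.range L ×ˢ Finset.range L).filter fun p ↦ (p.1 : ℤ) - p.2 = n).card =
      L - n.natAbs := by
  have key : ((Finset.range L ×ˢ Finset.range L).filter fun p ↦ (p.1 : ℤ) - p.2 = n) =
      (Finset.range (L - n.natAbs)).image fun b ↦ (b + n.toNat, b + (-n).toNat) := by
    ext ⟨a, b⟩
    simp only [Finset.mem_filter, Finset.mem_product, Finset.mem_range, Finset.mem_image,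
      Prod.mk.injEq]
    constructor
    · exact fun h ↦ ⟨min a b, by omega⟩
    · rintro ⟨c, h⟩; omega
  rw [key, Finset.card_image_of_injective _ fun b c h ↦ by simpa using h, Finset.card_range]

variable [Fact (0 < T)]

lemma integrable_fejerKernel (L : ℕ) :
    Integrable (fun x : AddCircle T ↦ (fejerKernel L x : ℂ)) haarAddCircle :=
  (Complex.continuous_ofReal.comp (continuous_fejerKernel L)).integrable_of_hasCompactSupport
    (HasCompactSupport.of_compactSpace _)

-- The subtraction in `ℕ` truncates to `0` beyond the degree of the kernel.
lemma fourierCoeff_fejerKernel (L : ℕ) (n : ℤ) :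
    fourierCoeff (fun x : AddCircle T ↦ (fejerKernel L x : ℂ)) n =
      ((L - n.natAbs : ℕ) : ℂ) / L := by
  have hint (m : ℤ) : Integrable (fourier m : AddCircle T → ℂ) haarAddCircle :=
    (fourier m).continuous.integrable_of_hasCompactSupport (HasCompactSupport.of_compactSpace _)
  have hsum := congrFun (fourierCoeff.sum (Finset.range L ×ˢ Finset.range L)
    (fun p ↦ (fourier ((p.1 : ℤ) - p.2) : AddCircle T → ℂ)) fun p _ ↦ hint _) n
  simp only [fourierCoeff_fourier, Finset.sum_apply, Pi.single_apply, eq_comm (a := n)] at hsum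
  simp_rw [ofReal_fejerKernel, fourierCoeff.const_mul]
  rw [← Finset.sum_fn, hsum, Finset.sum_boole, card_range_product_filter_sub_eq, div_eq_inv_mul]

lemma integral_norm_fejerKernel_le_one (L : ℕ) :
    ∫ x : AddCircle T, ‖(fejerKernel L x : ℂ)‖ ∂haarAddCircle ≤ 1 := by
  have hcoeff := fourierCoeff_fejerKernel (T := T) L 0
  simp only [fourierCoeff, neg_zero, fourier_zero, one_smul, Int.natAbs_zero, Nat.sub_zero]
    at hcoeff
  have hint : ∫ x : AddCircle T, fejerKernel L x ∂haarAddCircle = (L : ℝ) / L :=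
    Complex.ofReal_injective <| by rw [← integral_complex_ofReal, hcoeff]; push_cast; rfl
  simp only [Complex.norm_real, Real.norm_of_nonneg (fejerKernel_nonneg L _), hint]
  exact div_self_le_one _

lemma norm_fourierCoeff_fejerKernel_sub_one_le {L : ℕ} {n : ℤ} (hn : n.natAbs < L) :
    ‖fourierCoeff (fun x : AddCircle T ↦ (fejerKernel L x : ℂ)) n - 1‖ ≤ n.natAbs / L := by
  have hL : (L : ℂ) ≠ 0 := by exact_mod_cast (Nat.zero_le _).trans_lt hn |>.ne'
  rw [fourierCoeff_fejerKernel, Nat.cast_sub hn.le, sub_div, div_self hL, sub_sub_cancel_left,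
    norm_neg, norm_div, Complex.norm_natCast, Complex.norm_natCast]

end Fejer

section Windows

variable {T : ℝ}

/-- The stretch `∑_{n ≤ k < n + N} a_k e^{2πikx/T}` of the trigonometric series with coefficients
`a`. A difference of two partial sums of a real Fourier series is the real part of such a sum. -/
noncomputable def fourierWindow (a : ℤ → ℂ) (n : ℤ) (N : ℕ) (x : AddCircle T) : ℂ :=
  ∑ r ∈ Finset.range N, a (n + r) * fourier (n + r) x

lemma fourierWindow_add_of_eq_mul {a b : ℤ → ℂ} {c : ℂ} {m n : ℤ} {N : ℕ}
    (h : ∀ r < N, a (m + n + r) = c * b (n + r)) (x : AddCircle T) :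
    fourierWindow a (m + n) N x = c * (fourier m x * fourierWindow b n N x) := by
  simp only [fourierWindow, Finset.mul_sum]
  refine Finset.sum_congr rfl fun r hr ↦ ?_
  rw [h r (Finset.mem_range.1 hr), add_assoc, fourier_add]
  ring

lemma norm_fourierWindow_add_sub_le {a b : ℤ → ℂ} {m n : ℤ} {N : ℕ} {δ : ℝ}
    (h : ∀ r < N, ‖a (m + n + r) - b (n + r)‖ ≤ δ) (x : AddCircle T) :
    ‖fourierWindow a (m + n) N x - fourier m x * fourierWindow b n N x‖ ≤ N * δ := by
  have hdiff : fourierWindow a (m + n) N x - fourier m x * fourierWindow b n N x =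
      ∑ r ∈ Finset.range N, (a (m + n + r) - b (n + r)) * fourier (m + n + r) x := by
    simp only [fourierWindow, Finset.mul_sum, ← Finset.sum_sub_distrib, add_assoc m, fourier_add]
    exact Finset.sum_congr rfl fun r _ ↦ by ring
  rw [hdiff]
  refine (norm_sum_le_of_le (n := fun _ ↦ δ) _ fun r hr ↦ ?_).trans_eq (by simp)
  rw [norm_mul, norm_fourier_apply, mul_one]
  exact h r (Finset.mem_range.1 hr)

lemma fourierPartialSum_add_sub (f : AddCircle (1 : ℝ) → ℝ) (n N : ℕ) (x : AddCircle (1 : ℝ)) :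
    fourierPartialSum (fun t ↦ (f t : ℂ)) (n + N) x - fourierPartialSum (fun t ↦ (f t : ℂ)) n x =
      ((2 * (fourierWindow (fourierCoeff fun t ↦ (f t : ℂ)) (n + 1) N x).re : ℝ) : ℂ) := by
  induction N with
  | zero => simp [fourierWindow]
  | succ N ih =>
    set k : ℤ := (n : ℤ) + 1 + N with hk
    have hset : Finset.Icc (-((n + (N + 1) : ℕ) : ℤ)) ((n + (N + 1) : ℕ) : ℤ) =
        insert k (insert (-k) (Finset.Icc (-((n + N : ℕ) : ℤ)) ((n + N : ℕ) : ℤ))) := by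
      ext j
      simp only [Finset.mem_Icc, Finset.mem_insert]
      omega
    have hstep : fourierPartialSum (fun t ↦ (f t : ℂ)) (n + (N + 1)) x =
        fourierPartialSum (fun t ↦ (f t : ℂ)) (n + N) x +
          ((2 * (fourierCoeff (fun t ↦ (f t : ℂ)) k * fourier k x).re : ℝ) : ℂ) := by
      rw [fourierPartialSum, hset, Finset.sum_insert, Finset.sum_insert, fourierCoeff_ofReal_neg,
        fourier_neg, ← map_mul, Complex.ofReal_mul, Complex.re_eq_add_conj, fourierPartialSum]
      · push_cast; ring
      all_goals simp only [Finset.mem_Icc, Finset.mem_insert]; omega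
    rw [hstep, add_sub_right_comm, ih, fourierWindow, fourierWindow, Finset.sum_range_succ,
      Complex.add_re, ← hk]
    push_cast
    ring

lemma fourierPartialSum_re_add_sub {g : AddCircle (1 : ℝ) → ℂ} (hg : Integrable g haarAddCircle)
    (hneg : ∀ k < 0, fourierCoeff g k = 0) (n N : ℕ) (x : AddCircle (1 : ℝ)) :
    fourierPartialSum (fun t ↦ ((g t).re : ℂ)) (n + N) x -
        fourierPartialSum (fun t ↦ ((g t).re : ℂ)) n x =
      ((fourierWindow (fourierCoeff g) (n + 1) N x).re : ℂ) := by
  have hcoeff (r : ℕ) : fourierCoeff (fun t ↦ ((g t).re : ℂ)) (n + 1 + r) =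
      2⁻¹ * fourierCoeff g (n + 1 + r) := by
    rw [fourierCoeff_re hg, hneg (-_) (by omega), map_zero, add_zero]
  rw [fourierPartialSum_add_sub (fun t ↦ (g t).re)]
  simp only [fourierWindow, hcoeff, mul_assoc, ← Finset.mul_sum]
  simp [← mul_assoc]

end Windows

section DenseOrbits

variable {ι : Type*} {T : ℝ} [Fact (0 < T)]

lemma exists_forall_exists_le_dist_lt {X : Type*} [PseudoMetricSpace X] [CompactSpace X] {u : ℕ → X}
    (hu : DenseRange u) {ε : ℝ} (hε : 0 < ε) : ∃ R, ∀ x, ∃ m ≤ R, dist (u m) x < ε := by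
  obtain ⟨t, ht⟩ := isCompact_univ.elim_finite_subcover (fun m ↦ Metric.ball (u m) ε)
    (fun m ↦ Metric.isOpen_ball) fun x _ ↦ by
      obtain ⟨m, hm⟩ := hu.exists_dist_lt x hε
      exact Set.mem_iUnion.2 ⟨m, hm⟩
  refine ⟨t.sup id, fun x ↦ ?_⟩
  obtain ⟨m, hmt, hm⟩ := Set.mem_iUnion₂.1 (ht (Set.mem_univ x))
  exact ⟨m, Finset.le_sup (f := id) hmt, Metric.mem_ball'.1 hm⟩

lemma exists_nsmul_eq_dist_le (t θ : AddCircle T) {m : ℕ} (hm : 0 < m) :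
    ∃ y : AddCircle T, m • y = θ ∧ dist y t ≤ T / m := by
  have : 0 < T := Fact.out
  have hm' : (0 : ℝ) < m := by exact_mod_cast hm
  obtain ⟨δ, ⟨hδ0, hδT⟩, hδ⟩ : θ - m • t ∈ ((↑) : ℝ → AddCircle T) '' Set.Ico 0 (0 + T) :=
    AddCircle.coe_image_Ico_eq T 0 ▸ Set.mem_univ _
  rw [zero_add] at hδT
  refine ⟨t + (δ / m : ℝ), ?_, ?_⟩
  · rw [nsmul_add, ← coe_nsmul, nsmul_eq_mul, mul_div_cancel₀ _ hm'.ne', hδ, add_sub_cancel]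
  · rw [dist_eq_norm, add_sub_cancel_left]
    refine QuotientAddGroup.norm_mk_le_norm.trans ?_
    rw [Real.norm_of_nonneg (by positivity)]
    gcongr

lemma denseRange_toCircle_neg_nsmul {y : ι → AddCircle T} (hy : DenseRange fun m : ℕ ↦ m • y) :
    DenseRange fun (m : ℕ) i ↦ toCircle (-(m • y i)) := by
  have hT : T ≠ 0 := (Fact.out : 0 < T).ne'
  have hsurj : Function.Surjective fun (θ : ι → AddCircle T) i ↦ toCircle (-θ i) := fun c ↦
    ⟨fun i ↦ -(homeomorphCircle hT).symm (c i), by simp [← homeomorphCircle_apply hT]⟩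
  exact hsurj.denseRange.comp hy (by fun_prop)

variable [Finite ι]

lemma dense_setOf_exists_nsmul_eq (θ : ι → AddCircle T) :
    Dense {y : ι → AddCircle T | ∃ m : ℕ, m • y = θ} := by
  have := Fintype.ofFinite ι
  refine Metric.dense_iff.2 fun t ρ hρ ↦ ?_
  obtain ⟨m, hm⟩ := exists_nat_gt (T / ρ)
  have hm' : (0 : ℝ) < m := (div_pos Fact.out hρ).trans hm
  choose y hy hdist using fun i ↦ exists_nsmul_eq_dist_le (t i) (θ i) (Nat.cast_pos.1 hm')
  refine ⟨y, (dist_pi_lt_iff hρ).2 fun i ↦ (hdist i).trans_lt ?_, m, funext hy⟩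
  rwa [div_lt_comm₀ hm' hρ]

/-- A soft substitute for Kronecker's theorem. -/
lemma dense_setOf_denseRange_nsmul :
    Dense {y : ι → AddCircle T | DenseRange fun m : ℕ ↦ m • y} := by
  let B := TopologicalSpace.countableBasis (ι → AddCircle T)
  have hB : TopologicalSpace.IsTopologicalBasis B := TopologicalSpace.isBasis_countableBasis _
  have hopen : ∀ V ∈ B, IsOpen (⋃ m : ℕ, (fun y : ι → AddCircle T ↦ m • y) ⁻¹' V) :=
    fun V hV ↦ isOpen_iUnion fun m ↦ (hB.isOpen hV).preimage (continuous_const_smul m)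
  have hdense : ∀ V ∈ B, Dense (⋃ m : ℕ, (fun y : ι → AddCircle T ↦ m • y) ⁻¹' V) := by
    intro V hV
    obtain ⟨θ, hθ⟩ := TopologicalSpace.nonempty_of_mem_countableBasis hV
    refine (dense_setOf_exists_nsmul_eq θ).mono ?_
    rintro y ⟨m, rfl⟩
    exact Set.mem_iUnion.2 ⟨m, hθ⟩
  refine (dense_biInter_of_isOpen hopen (TopologicalSpace.countable_countableBasis _)
    hdense).mono fun y hy ↦ hB.dense_iff.2 fun V hV _ ↦ ?_
  obtain ⟨m, hm⟩ := Set.mem_iUnion.1 (Set.mem_iInter₂.1 hy V hV)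
  exact ⟨m • y, hm, m, rfl⟩

lemma exists_forall_phases_exists_norm_fourier_sub_le (y₀ : ι → AddCircle T) (K : ℕ) {η : ℝ}
    (hη : 0 < η) :
    ∃ (y : ι → AddCircle T) (R : ℕ), ∀ c : ι → Circle, ∃ m ≤ R, ∀ i, ∀ r < K,
      ‖fourier (-((m : ℤ) + r)) (y i) - c i * fourier (-(r : ℤ)) (y₀ i)‖ ≤ η := by
  have := Fintype.ofFinite ι
  have hnear : ∀ᶠ y in 𝓝 y₀, ∀ i, ∀ r ∈ Finset.range K,
      ‖fourier (-(r : ℤ)) (y i) - fourier (-(r : ℤ)) (y₀ i)‖ < η / 2 := by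
    refine eventually_all.2 fun i ↦ (Finset.eventually_all _).2 fun r _ ↦ ?_
    have hcont : Continuous fun y : ι → AddCircle T ↦
        ‖fourier (-(r : ℤ)) (y i) - fourier (-(r : ℤ)) (y₀ i)‖ := by fun_prop
    exact hcont.tendsto y₀ |>.eventually_lt_const (by simpa using half_pos hη)
  obtain ⟨y, hdense, hy⟩ := dense_setOf_denseRange_nsmul.inter_nhds_nonempty hnear
  obtain ⟨R, hR⟩ :=
    exists_forall_exists_le_dist_lt (denseRange_toCircle_neg_nsmul hdense) (half_pos hη)
  refine ⟨y, R, fun c ↦ ?_⟩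
  obtain ⟨m, hmR, hm⟩ := hR c
  refine ⟨m, hmR, fun i r hr ↦ ?_⟩
  have hdist : dist (toCircle (-(m • y i)) : ℂ) (c i) < η / 2 :=
    (dist_pi_lt_iff (half_pos hη)).1 hm i
  have hphase : ‖fourier (-(m : ℤ)) (y i) - c i‖ < η / 2 := by simpa [dist_eq_norm] using hdist
  have hpos := hy i r (Finset.mem_range.2 hr)
  calc ‖fourier (-((m : ℤ) + r)) (y i) - c i * fourier (-(r : ℤ)) (y₀ i)‖
      = ‖(fourier (-(m : ℤ)) (y i) - c i) * fourier (-(r : ℤ)) (y i) +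
          c i * (fourier (-(r : ℤ)) (y i) - fourier (-(r : ℤ)) (y₀ i))‖ := by
        rw [neg_add, fourier_add]; ring_nf
    _ ≤ ‖fourier (-(m : ℤ)) (y i) - c i‖ +
          ‖fourier (-(r : ℤ)) (y i) - fourier (-(r : ℤ)) (y₀ i)‖ := by
        refine (norm_add_le _ _).trans_eq ?_
        rw [norm_mul, norm_mul, norm_fourier_apply, Circle.norm_coe, one_mul, mul_one]
    _ ≤ η := by linarith

end DenseOrbits

section DirichletSums

lemma norm_one_sub_fourier_one_le (t : ℝ) :
    ‖1 - fourier 1 (t : AddCircle (1 : ℝ))‖ ≤ 2 * Real.pi * |t| := by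
  have h := Real.norm_exp_I_mul_ofReal_sub_one_le (x := 2 * Real.pi * t)
  rw [Real.norm_eq_abs, abs_mul, abs_of_pos Real.two_pi_pos] at h
  have harg : 2 * (Real.pi : ℂ) * Complex.I * (1 : ℤ) * t / (1 : ℝ) =
      Complex.I * (2 * Real.pi * t : ℝ) := by push_cast; ring
  rwa [norm_sub_rev, fourier_coe_apply, harg]

lemma one_sub_fourier_one_mul_sum_fourier {T : ℝ} (N : ℕ) (x : AddCircle T) :
    (1 - fourier 1 x) * ∑ r ∈ Finset.range N, fourier r x = 1 - fourier N x := by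
  simp only [fourier_natCast_apply, mul_neg_geom_sum]

variable {N : ℕ} [NeZero N]

lemma fourier_toAddCircle (k : ZMod N) : fourier N (ZMod.toAddCircle k) = 1 := by
  rw [fourier_apply, natCast_zsmul, ← map_nsmul, nsmul_eq_mul, CharP.cast_eq_zero, zero_mul,
    map_zero, toCircle_zero, Circle.coe_one]

lemma exists_eq_coe_add_toAddCircle (x : AddCircle (1 : ℝ)) :
    ∃ (s : ℝ) (k : ZMod N), 0 ≤ s ∧ s * N ≤ 1 ∧ x = s + ZMod.toAddCircle k := by
  have hN : (0 : ℝ) < N := by exact_mod_cast NeZero.pos N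
  obtain ⟨t, rfl⟩ := QuotientAddGroup.mk_surjective x
  refine ⟨Int.fract (t * N) / N, (⌊t * N⌋ : ZMod N), by positivity, ?_, ?_⟩
  · rw [div_mul_cancel₀ _ hN.ne']
    exact (Int.fract_lt_one _).le
  · rw [ZMod.toAddCircle_intCast, ← coe_add, ← add_div, Int.fract_add_floor,
      mul_div_cancel_right₀ _ hN.ne']

lemma log_le_sum_zmod_inv_val_add_one : Real.log N ≤ ∑ i : ZMod N, ((i.val : ℝ) + 1)⁻¹ := by
  have hsum : ((harmonic N : ℚ) : ℝ) = ∑ i : ZMod N, ((i.val : ℝ) + 1)⁻¹ := by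
    rw [harmonic, Rat.cast_sum]
    exact Finset.sum_nbij' Nat.cast ZMod.val (by simp) (by simp [ZMod.val_lt])
      (fun i hi ↦ ZMod.val_cast_of_lt (Finset.mem_range.1 hi)) (by simp)
      (fun i hi ↦ by simp [ZMod.val_cast_of_lt (Finset.mem_range.1 hi)])
  refine (Real.log_le_log (by exact_mod_cast NeZero.pos N) ?_).trans
    ((log_add_one_le_harmonic N).trans_eq hsum)
  simp

lemma norm_one_sub_fourier_mul_inv_le {s : ℝ} (hs0 : 0 ≤ s) (hs1 : s * N ≤ 1) (i : ZMod N) :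
    ‖1 - fourier N (s : AddCircle (1 : ℝ))‖ * (N / (2 * Real.pi)) * ((i.val : ℝ) + 1)⁻¹ ≤
      ‖∑ r ∈ Finset.range N, fourier r ((s : AddCircle (1 : ℝ)) + ZMod.toAddCircle i)‖ := by
  have hN : (0 : ℝ) < N := by exact_mod_cast NeZero.pos N
  set D := ∑ r ∈ Finset.range N, fourier r ((s : AddCircle (1 : ℝ)) + ZMod.toAddCircle i)
  have hdist : ‖1 - fourier 1 ((s : AddCircle (1 : ℝ)) + ZMod.toAddCircle i)‖ ≤
      2 * Real.pi * ((i.val + 1) / N) := by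
    rw [ZMod.toAddCircle_apply, ← coe_add]
    refine (norm_one_sub_fourier_one_le _).trans ?_
    rw [abs_of_nonneg (by positivity), add_comm, add_div]
    gcongr
    rwa [le_div_iff₀ hN]
  have hgeom : ‖1 - fourier N (s : AddCircle (1 : ℝ))‖ ≤
      2 * Real.pi * ((i.val + 1) / N) * ‖D‖ := by
    have h := one_sub_fourier_one_mul_sum_fourier N
      ((s : AddCircle (1 : ℝ)) + ZMod.toAddCircle i)
    rw [fourier_apply_add N, fourier_toAddCircle, mul_one] at h
    rw [← h, norm_mul]
    gcongr
  calc _ ≤ 2 * Real.pi * ((i.val + 1) / N) * ‖D‖ * (N / (2 * Real.pi)) * ((i.val : ℝ) + 1)⁻¹ := by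
        gcongr
    _ = ‖D‖ := by field_simp

/-- The points `x + k / N` lie at distances at most `1 / N, 2 / N, …, 1` from `0` in `ℝ / ℤ`. -/
lemma norm_one_sub_fourier_mul_log_le_sum (x : AddCircle (1 : ℝ)) :
    ‖1 - fourier N x‖ * (N / (2 * Real.pi)) * Real.log N ≤
      ∑ i : ZMod N, ‖∑ r ∈ Finset.range N, fourier r (x + ZMod.toAddCircle i)‖ := by
  obtain ⟨s, k, hs0, hs1, rfl⟩ := exists_eq_coe_add_toAddCircle (N := N) x
  have hshift : ∑ i : ZMod N, ‖∑ r ∈ Finset.range N,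
        fourier r ((s : AddCircle (1 : ℝ)) + ZMod.toAddCircle k + ZMod.toAddCircle i)‖ =
      ∑ i : ZMod N, ‖∑ r ∈ Finset.range N,
        fourier r ((s : AddCircle (1 : ℝ)) + ZMod.toAddCircle i)‖ := by
    simp only [add_assoc, ← map_add]
    exact Equiv.sum_comp (Equiv.addLeft k) fun i ↦ ‖∑ r ∈ Finset.range N,
      fourier r ((s : AddCircle (1 : ℝ)) + ZMod.toAddCircle i)‖
  rw [hshift, fourier_apply_add N, fourier_toAddCircle, mul_one]
  refine (mul_le_mul_of_nonneg_left log_le_sum_zmod_inv_val_add_one (by positivity)).trans ?_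
  rw [Finset.mul_sum]
  exact Finset.sum_le_sum fun i _ ↦ norm_one_sub_fourier_mul_inv_le hs0 hs1 i

end DirichletSums

section PointMasses

variable {ι : Type*} [Fintype ι] {T : ℝ}

/-- The Fourier coefficients of the average of the complex point masses `c i • δ_{y i}` on
`ℝ/Tℤ`. -/
noncomputable def pointMassCoeff (c : ι → ℂ) (y : ι → AddCircle T) (r : ℤ) : ℂ :=
  𝔼 i, c i * fourier (-r) (y i)

/-- The average of the translates `F (· - y i)`, that is, the average of the unit point masses at
the points `y i` smoothed by `F`. -/
noncomputable def averagedTranslates (F : AddCircle T → ℂ) (y : ι → AddCircle T)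
    (x : AddCircle T) : ℂ :=
  𝔼 i, F (x - y i)

lemma fourierWindow_pointMassCoeff_zero (c : ι → ℂ) (y : ι → AddCircle T) (N : ℕ)
    (x : AddCircle T) :
    fourierWindow (pointMassCoeff c y) 0 N x =
      𝔼 i, c i * ∑ r ∈ Finset.range N, fourier r (x - y i) := by
  simp only [fourierWindow, pointMassCoeff, Finset.expect_mul, ← Finset.expect_sum_comm,
    Finset.mul_sum, zero_add, sub_eq_add_neg, fourier_apply_add]
  refine Finset.expect_congr rfl fun i _ ↦ Finset.sum_congr rfl fun r _ ↦ ?_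
  have hneg : fourier (-(r : ℤ)) (y i) = fourier r (-y i) := by simp
  rw [hneg]
  ring

lemma norm_pointMassCoeff_sub_le [Nonempty ι] {c c' : ι → ℂ} {y y' : ι → AddCircle T}
    {k r : ℤ} {η : ℝ} (h : ∀ i, ‖c i * fourier (-k) (y i) - c' i * fourier (-r) (y' i)‖ ≤ η) :
    ‖pointMassCoeff c y k - pointMassCoeff c' y' r‖ ≤ η := by
  rw [pointMassCoeff, pointMassCoeff, ← Finset.expect_sub_distrib]
  exact (RCLike.norm_expect_le (K := ℂ)).trans
    (Finset.expect_le Finset.univ_nonempty fun i _ ↦ h i)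

lemma norm_pointMassCoeff_one_le_one [Nonempty ι] (y : ι → AddCircle T) (r : ℤ) :
    ‖pointMassCoeff 1 y r‖ ≤ 1 :=
  (RCLike.norm_expect_le (K := ℂ)).trans (Finset.expect_le Finset.univ_nonempty fun i _ ↦ by
    rw [Pi.one_apply, one_mul, norm_fourier_apply])

variable [Fact (0 < T)]

lemma integrable_averagedTranslates {F : AddCircle T → ℂ} (hF : Integrable F haarAddCircle)
    (y : ι → AddCircle T) : Integrable (averagedTranslates F y) haarAddCircle := by
  unfold averagedTranslates
  simp only [Fintype.expect_eq_sum_div_card]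
  exact (integrable_finsetSum _ fun i _ ↦ hF.comp_sub_right (y i)).div_const _

lemma fourierCoeff_averagedTranslates {F : AddCircle T → ℂ} (hF : Integrable F haarAddCircle)
    (y : ι → AddCircle T) (r : ℤ) :
    fourierCoeff (averagedTranslates F y) r = fourierCoeff F r * pointMassCoeff 1 y r := by
  have hsum := congrFun (fourierCoeff.sum Finset.univ (fun i x ↦ F (x - y i))
    fun i _ ↦ hF.comp_sub_right (y i)) r
  unfold averagedTranslates
  simp only [Fintype.expect_eq_sum_div_card, div_eq_inv_mul, fourierCoeff.const_mul]
  rw [← Finset.sum_fn, hsum, Finset.sum_apply]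
  simp only [fourierCoeff_comp_sub_right, smul_eq_mul, pointMassCoeff,
    Fintype.expect_eq_sum_div_card, Pi.one_apply, one_mul, ← Finset.sum_mul]
  ring

variable [Nonempty ι]

lemma integral_norm_averagedTranslates_le {F : AddCircle T → ℂ} (hF : Integrable F haarAddCircle)
    (y : ι → AddCircle T) :
    ∫ x, ‖averagedTranslates F y x‖ ∂haarAddCircle ≤ ∫ x, ‖F x‖ ∂haarAddCircle := by
  have hint (i : ι) : Integrable (fun x ↦ ‖F (x - y i)‖) haarAddCircle :=
    (hF.comp_sub_right (y i)).norm
  calc ∫ x, ‖averagedTranslates F y x‖ ∂haarAddCircle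
      ≤ ∫ x, 𝔼 i, ‖F (x - y i)‖ ∂haarAddCircle := by
        refine integral_mono (integrable_averagedTranslates hF y).norm ?_
          fun x ↦ RCLike.norm_expect_le (K := ℂ)
        simp only [Fintype.expect_eq_sum_div_card]
        exact (integrable_finsetSum _ fun i _ ↦ hint i).div_const _
    _ = 𝔼 i, ∫ x, ‖F (x - y i)‖ ∂haarAddCircle := by
        simp only [Fintype.expect_eq_sum_div_card, integral_div]
        rw [integral_finsetSum _ fun i _ ↦ hint i]
    _ = ∫ x, ‖F x‖ ∂haarAddCircle := by
        simp only [integral_sub_right_eq_self fun x ↦ ‖F x‖, Fintype.expect_const]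

/-- Every weighting of the point masses at `y₀` by phases is seen in the spectrum of the single
function `P`, at a place `m` that depends on the weighting. -/
lemma exists_approx_pointMassCoeff (y₀ : ι → AddCircle T) (K : ℕ) {η : ℝ} (hη : 0 < η) :
    ∃ (P : AddCircle T → ℂ) (L : ℕ), Integrable P haarAddCircle ∧
      ∫ x, ‖P x‖ ∂haarAddCircle ≤ 1 ∧ (∀ r : ℤ, L ≤ r.natAbs → fourierCoeff P r = 0) ∧
      ∀ c : ι → Circle, ∃ m : ℕ, m + K ≤ L ∧ ∀ r < K,
        ‖fourierCoeff P (m + r) - pointMassCoeff (fun i ↦ c i) y₀ r‖ ≤ η := by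
  obtain ⟨y, R, hy⟩ := exists_forall_phases_exists_norm_fourier_sub_le y₀ K (half_pos hη)
  obtain ⟨L, hLη, hL⟩ :=
    ((tendsto_const_div_atTop_nhds_zero_nat ((R : ℝ) + K)).eventually_le_const (half_pos hη)
      |>.and (eventually_ge_atTop (R + K))).exists
  have hF := integrable_fejerKernel (T := T) L
  refine ⟨averagedTranslates (fun x ↦ (fejerKernel L x : ℂ)) y, L,
    integrable_averagedTranslates hF y,
    (integral_norm_averagedTranslates_le hF y).trans (integral_norm_fejerKernel_le_one L),
    fun r hr ↦ ?_, fun c ↦ ?_⟩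
  · have hdeg : L - r.natAbs = 0 := by omega
    rw [fourierCoeff_averagedTranslates hF, fourierCoeff_fejerKernel, hdeg]
    simp
  · obtain ⟨m, hmR, hm⟩ := hy c
    refine ⟨m, by omega, fun r hr ↦ ?_⟩
    have hmass : ‖pointMassCoeff 1 y (m + r) - pointMassCoeff (fun i ↦ (c i : ℂ)) y₀ r‖ ≤ η / 2 :=
      norm_pointMassCoeff_sub_le fun i ↦ by simpa using hm i r hr
    have hkernel : ‖fourierCoeff (fun x : AddCircle T ↦ (fejerKernel L x : ℂ)) (m + r) - 1‖ ≤
        η / 2 := by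
      refine (norm_fourierCoeff_fejerKernel_sub_one_le (by omega)).trans (le_trans ?_ hLη)
      gcongr
      exact_mod_cast (by omega : ((m : ℤ) + r).natAbs ≤ R + K)
    rw [fourierCoeff_averagedTranslates hF]
    calc _ = ‖(fourierCoeff (fun x : AddCircle T ↦ (fejerKernel L x : ℂ)) (m + r) - 1) *
            pointMassCoeff 1 y (m + r) +
          (pointMassCoeff 1 y (m + r) - pointMassCoeff (fun i ↦ (c i : ℂ)) y₀ r)‖ := by ring_nf
      _ ≤ η / 2 * 1 + η / 2 := by
        refine norm_add_le_of_le ?_ hmass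
        rw [norm_mul]
        exact mul_le_mul hkernel (norm_pointMassCoeff_one_le_one y _) (norm_nonneg _)
          (half_pos hη).le
      _ = η := by ring

end PointMasses

section Blocks

lemma abs_im_mul_norm_le {w : ℂ} (hw : ‖w‖ = 1) (W : ℂ) :
    |w.im| * ‖W‖ ≤ 2 * |W.re| + |(w * W).re| := by
  have him : |w.im| ≤ 1 := (Complex.abs_im_le_norm w).trans hw.le
  have hre : |w.re| ≤ 1 := (Complex.abs_re_le_norm w).trans hw.le
  have hprod : |w.im| * |W.im| ≤ |W.re| + |(w * W).re| := calc
    |w.im| * |W.im| = |w.re * W.re - (w * W).re| := by rw [← abs_mul, Complex.mul_re]; ring_nf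
    _ ≤ |w.re| * |W.re| + |(w * W).re| := (abs_sub _ _).trans_eq (by rw [abs_mul])
    _ ≤ |W.re| + |(w * W).re| := by
      gcongr
      exact mul_le_of_le_one_left (abs_nonneg _) hre
  calc |w.im| * ‖W‖ ≤ |w.im| * (|W.re| + |W.im|) := by
        gcongr
        exact Complex.norm_le_abs_re_add_abs_im W
    _ ≤ |W.re| + (|W.re| + |(w * W).re|) := by
        rw [mul_add]
        exact add_le_add (mul_le_of_le_one_left (abs_nonneg _) him) hprod
    _ = 2 * |W.re| + |(w * W).re| := by ring

variable {N : ℕ} [NeZero N]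

/-- The phases align the Dirichlet sums at the points `x + i / N`. -/
lemma exists_phases_le_norm_fourierWindow (x : AddCircle (1 : ℝ)) :
    ∃ c : ZMod N → Circle, ‖1 - fourier N x‖ / (2 * Real.pi) * Real.log N ≤
      ‖fourierWindow (pointMassCoeff (fun i ↦ c i) fun i ↦ -ZMod.toAddCircle i) 0 N x‖ := by
  have hN : (N : ℝ) ≠ 0 := NeZero.ne _
  choose c hc hphase using fun i : ZMod N ↦ Complex.exists_norm_eq_mul_self
    (∑ r ∈ Finset.range N, fourier r (x + ZMod.toAddCircle i))
  refine ⟨fun i ↦ ⟨c i, by simp [Submonoid.unitSphere, hc i]⟩, ?_⟩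
  have hsum := div_le_div_of_nonneg_right (norm_one_sub_fourier_mul_log_le_sum (N := N) x)
    (Nat.cast_nonneg N)
  rw [fourierWindow_pointMassCoeff_zero]
  simp only [sub_neg_eq_add, ← hphase, Fintype.expect_eq_sum_div_card, ZMod.card,
    ← Complex.ofReal_sum, ← Complex.ofReal_natCast, ← Complex.ofReal_div, Complex.norm_real]
  refine le_trans (le_of_eq ?_) (hsum.trans (Real.le_norm_self _))
  field_simp

lemma fourierWindow_pointMassCoeff_natCast (c : ZMod N → ℂ) (x : AddCircle (1 : ℝ)) :
    fourierWindow (pointMassCoeff c fun i ↦ -ZMod.toAddCircle i) N N x =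
      fourier N x * fourierWindow (pointMassCoeff c fun i ↦ -ZMod.toAddCircle i) 0 N x := by
  have hperiod (r : ℕ) : pointMassCoeff c (fun i : ZMod N ↦ -ZMod.toAddCircle i) (N + 0 + r) =
      1 * pointMassCoeff c (fun i ↦ -ZMod.toAddCircle i) (0 + r) := by
    simp only [pointMassCoeff, one_mul, add_zero, zero_add, neg_add, fourier_add]
    refine Finset.expect_congr rfl fun i _ ↦ ?_
    have : fourier (-(N : ℤ)) (-ZMod.toAddCircle i) = 1 := by
      rw [← fourier_toAddCircle i]; simp
    rw [this, one_mul]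
  simpa using fourierWindow_add_of_eq_mul (m := N) (n := 0) (fun r _ ↦ hperiod r) x

/-- One of two consecutive windows has a large real part, since they differ by the factor
`fourier N x`. -/
lemma exists_le_abs_re_fourierWindow_pointMassCoeff (x : AddCircle (1 : ℝ)) :
    ∃ c : ZMod N → Circle, ∀ z : ℂ, ‖z‖ = 1 → ∃ s ∈ ({0, N} : Set ℕ),
      (fourier N x).im ^ 2 * Real.log N / (6 * Real.pi) ≤ |(z * fourierWindow
        (pointMassCoeff (fun i ↦ c i) fun i ↦ -ZMod.toAddCircle i) s N x).re| := by
  obtain ⟨c, hc⟩ := exists_phases_le_norm_fourierWindow (N := N) x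
  refine ⟨c, fun z hz ↦ ?_⟩
  set b := pointMassCoeff (fun i ↦ (c i : ℂ)) fun i : ZMod N ↦ -ZMod.toAddCircle i
  set w : ℂ := fourier N x
  have him : |w.im| ≤ ‖1 - w‖ := by simpa using Complex.abs_im_le_norm (1 - w)
  have hlarge : |w.im| * (|w.im| / (2 * Real.pi) * Real.log N) ≤
      2 * |(z * fourierWindow b 0 N x).re| + |(z * fourierWindow b N N x).re| := calc
    _ ≤ |w.im| * ‖z * fourierWindow b 0 N x‖ := by
      rw [norm_mul, hz, one_mul]
      refine mul_le_mul_of_nonneg_left (le_trans ?_ hc) (abs_nonneg _)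
      gcongr
    _ ≤ _ := by
      rw [fourierWindow_pointMassCoeff_natCast, mul_left_comm z]
      exact abs_im_mul_norm_le (norm_fourier_apply _ _) _
  have hsq : |w.im| * (|w.im| / (2 * Real.pi) * Real.log N) =
      3 * (w.im ^ 2 * Real.log N / (6 * Real.pi)) := by
    rw [← sq_abs]; field_simp; ring
  by_contra! h
  have h0 := h 0 (by simp)
  have h1 := h N (by simp)
  rw [Nat.cast_zero] at h0
  linarith

lemma exists_forall_exists_le_abs_re_fourierWindow (N : ℕ) [NeZero N] :
    ∃ (P : AddCircle (1 : ℝ) → ℂ) (L : ℕ), Integrable P haarAddCircle ∧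
      ∫ x, ‖P x‖ ∂haarAddCircle ≤ 1 ∧ (∀ r : ℤ, L ≤ r.natAbs → fourierCoeff P r = 0) ∧
      ∀ (x : AddCircle (1 : ℝ)) (z : ℂ), ‖z‖ = 1 → ∃ n : ℕ, n + N ≤ L ∧
        (fourier N x).im ^ 2 * Real.log N / (6 * Real.pi) - 1 ≤
          |(z * fourierWindow (fourierCoeff P) n N x).re| := by
  have hN : (0 : ℝ) < N := by exact_mod_cast NeZero.pos N
  obtain ⟨P, L, hP, hnorm, hband, happrox⟩ := exists_approx_pointMassCoeff
    (fun i : ZMod N ↦ (-ZMod.toAddCircle i : AddCircle (1 : ℝ))) (2 * N) (inv_pos.2 hN)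
  refine ⟨P, L, hP, hnorm, hband, fun x z hz ↦ ?_⟩
  obtain ⟨c, hc⟩ := exists_le_abs_re_fourierWindow_pointMassCoeff (N := N) x
  obtain ⟨m, hmL, hm⟩ := happrox c
  obtain ⟨s, hs, hlarge⟩ := hc (z * fourier m x) (by rw [norm_mul, hz, norm_fourier_apply, one_mul])
  have hsN : s ≤ N := by rcases hs with rfl | rfl <;> simp
  refine ⟨m + s, by omega, ?_⟩
  set W := fourierWindow (pointMassCoeff (fun i ↦ (c i : ℂ))
    fun i : ZMod N ↦ (-ZMod.toAddCircle i : AddCircle (1 : ℝ))) s N x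
  have herror : ‖fourierWindow (fourierCoeff P) (m + s) N x - fourier m x * W‖ ≤ 1 := by
    refine (norm_fourierWindow_add_sub_le (fun r hr ↦ ?_) x).trans_eq (mul_inv_cancel₀ hN.ne')
    simpa only [Nat.cast_add, add_assoc] using hm (s + r) (by omega)
  have hre : |(z * fourier m x * W).re| - |(z * fourierWindow (fourierCoeff P) (m + s) N x).re| ≤
      1 := by
    refine (abs_sub_abs_le_abs_sub _ _).trans ?_
    rw [← Complex.sub_re, mul_assoc, ← mul_sub]
    refine (Complex.abs_re_le_norm _).trans ?_
    rwa [norm_mul, hz, one_mul, norm_sub_rev]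
  push_cast
  linarith

end Blocks

section Gluing

/-- The centres of consecutive frequency bands of radii `L 0, L 1, …`, filling the positive
frequencies. -/
def bandCenter (L : ℕ → ℕ) (j : ℕ) : ℕ :=
  ∑ i ∈ Finset.range j, 2 * L i + L j

lemma bandCenter_add_le (L : ℕ → ℕ) {i j : ℕ} (hij : i < j) :
    bandCenter L i + L i + L j ≤ bandCenter L j := by
  have hmono := Finset.sum_le_sum_of_subset (f := fun i ↦ 2 * L i) (Finset.range_subset_range.2 hij)
  rw [Finset.sum_range_succ] at hmono
  unfold bandCenter
  omega

lemma add_le_natAbs_bandCenter_sub (L : ℕ → ℕ) {i j : ℕ} (hij : i ≠ j) :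
    L i + L j ≤ ((bandCenter L i : ℤ) - bandCenter L j).natAbs := by
  rcases hij.lt_or_gt with h | h <;> have := bandCenter_add_le L h <;> omega

variable {T : ℝ} {ι : Type*}

/-- The sum `∑ c_j e^{2πi M_j x/T} P_j(x)` of weighted blocks `P_j`, translated in frequency by
`M_j` so that they occupy disjoint bands. -/
noncomputable def modulatedSum (c : ι → ℂ) (M : ι → ℤ) (P : ι → AddCircle T → ℂ)
    (x : AddCircle T) : ℂ :=
  ∑' j, c j * (fourier (M j) x * P j x)

variable [Fact (0 < T)]

lemma fourierCoeff_mul_fourier_mul (c : ℂ) (m n : ℤ) (F : AddCircle T → ℂ) :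
    fourierCoeff (fun x ↦ c * (fourier m x * F x)) n = c * fourierCoeff F (n - m) := by
  rw [fourierCoeff.const_mul]
  exact congrArg _ (fourierCoeff_fourier_smul F m n)

variable {c : ι → ℂ} {M : ι → ℤ} {P : ι → AddCircle T → ℂ}

lemma integrable_mul_fourier_mul (hP : ∀ j, Integrable (P j) haarAddCircle) (j : ι) :
    Integrable (fun x ↦ c j * (fourier (M j) x * P j x)) haarAddCircle :=
  ((hP j).fourier_smul (M j)).const_mul (c j)

lemma summable_integral_norm_mul_fourier_mul (hc : Summable fun j ↦ ‖c j‖)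
    (hnorm : ∀ j, ∫ x, ‖P j x‖ ∂haarAddCircle ≤ 1) :
    Summable fun j ↦ ∫ x, ‖c j * (fourier (M j) x * P j x)‖ ∂haarAddCircle := by
  simp only [norm_mul, norm_fourier_apply, one_mul, integral_const_mul]
  exact hc.of_nonneg_of_le (fun j ↦ by positivity)
    fun j ↦ mul_le_of_le_one_right (norm_nonneg _) (hnorm j)

variable [Countable ι]

lemma integrable_modulatedSum (hc : Summable fun j ↦ ‖c j‖)
    (hP : ∀ j, Integrable (P j) haarAddCircle) (hnorm : ∀ j, ∫ x, ‖P j x‖ ∂haarAddCircle ≤ 1) :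
    Integrable (modulatedSum c M P) haarAddCircle :=
  integrable_tsum_of_summable_integral_norm (integrable_mul_fourier_mul hP)
    (summable_integral_norm_mul_fourier_mul hc hnorm)

lemma hasSum_fourierCoeff_modulatedSum (hc : Summable fun j ↦ ‖c j‖)
    (hP : ∀ j, Integrable (P j) haarAddCircle) (hnorm : ∀ j, ∫ x, ‖P j x‖ ∂haarAddCircle ≤ 1)
    (k : ℤ) :
    HasSum (fun j ↦ c j * fourierCoeff (P j) (k - M j)) (fourierCoeff (modulatedSum c M P) k) := by
  simp only [← fourierCoeff_mul_fourier_mul]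
  exact hasSum_fourierCoeff_tsum (integrable_mul_fourier_mul hP)
    (summable_integral_norm_mul_fourier_mul hc hnorm) k

variable {L : ι → ℕ}

lemma fourierCoeff_modulatedSum_eq_zero (hc : Summable fun j ↦ ‖c j‖)
    (hP : ∀ j, Integrable (P j) haarAddCircle) (hnorm : ∀ j, ∫ x, ‖P j x‖ ∂haarAddCircle ≤ 1)
    (hband : ∀ j (r : ℤ), L j ≤ r.natAbs → fourierCoeff (P j) r = 0) {k : ℤ}
    (hk : ∀ j, L j ≤ (k - M j).natAbs) : fourierCoeff (modulatedSum c M P) k = 0 :=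
  (hasSum_fourierCoeff_modulatedSum hc hP hnorm k).unique <| by
    simp only [hband _ _ (hk _), mul_zero, hasSum_zero]

lemma fourierCoeff_modulatedSum_of_natAbs_le (hc : Summable fun j ↦ ‖c j‖)
    (hP : ∀ j, Integrable (P j) haarAddCircle) (hnorm : ∀ j, ∫ x, ‖P j x‖ ∂haarAddCircle ≤ 1)
    (hband : ∀ j (r : ℤ), L j ≤ r.natAbs → fourierCoeff (P j) r = 0) {j : ι}
    (hsep : ∀ i ≠ j, L i + L j ≤ (M i - M j).natAbs) {k : ℤ} (hk : (k - M j).natAbs ≤ L j) :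
    fourierCoeff (modulatedSum c M P) k = c j * fourierCoeff (P j) (k - M j) :=
  (hasSum_fourierCoeff_modulatedSum hc hP hnorm k).unique <| hasSum_single j fun i hij ↦ by
    rw [hband i _ (by have := hsep i hij; omega), mul_zero]

lemma fourierWindow_modulatedSum (hc : Summable fun j ↦ ‖c j‖)
    (hP : ∀ j, Integrable (P j) haarAddCircle) (hnorm : ∀ j, ∫ x, ‖P j x‖ ∂haarAddCircle ≤ 1)
    (hband : ∀ j (r : ℤ), L j ≤ r.natAbs → fourierCoeff (P j) r = 0) {j : ι}
    (hsep : ∀ i ≠ j, L i + L j ≤ (M i - M j).natAbs) {n N : ℕ} (hn : n + N ≤ L j)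
    (x : AddCircle T) :
    fourierWindow (fourierCoeff (modulatedSum c M P)) (M j + n) N x =
      c j * (fourier (M j) x * fourierWindow (fourierCoeff (P j)) n N x) :=
  fourierWindow_add_of_eq_mul (fun r hr ↦ by
    rw [fourierCoeff_modulatedSum_of_natAbs_le hc hP hnorm hband hsep (by omega)]
    congr 2
    ring) x

end Gluing

section ExceptionalSets

lemma exists_pos_measure_norm_lt_le {α E : Type*} [MeasurableSpace α] {μ : Measure α}
    [IsFiniteMeasure μ] [NormedAddCommGroup E] {g : α → E} (hg : AEStronglyMeasurable g μ)
    (hne : ∀ᵐ a ∂μ, g a ≠ 0) {δ : ℝ≥0∞} (hδ : δ ≠ 0) :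
    ∃ τ > 0, μ {a | ‖g a‖ < τ} ≤ δ := by
  have hnull : μ (⋂ τ > 0, {a | ‖g a‖ < τ}) = 0 := by
    refine measure_mono_null (fun a ha ↦ ?_) hne
    simp only [Set.mem_iInter, Set.mem_ofPred_eq] at ha
    simpa using le_of_forall_gt ha
  have hlim := tendsto_measure_biInter_gt (μ := μ) (a := (0 : ℝ)) (s := fun τ ↦ {a | ‖g a‖ < τ})
    (fun τ _ ↦ nullMeasurableSet_lt hg.norm.aemeasurable aemeasurable_const)
    (fun _ _ _ hτ _ ha ↦ lt_of_lt_of_le ha hτ) ⟨1, one_pos, measure_ne_top _ _⟩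
  rw [hnull] at hlim
  obtain ⟨τ, hδτ, hτ⟩ := ((hlim.eventually_le_const hδ.bot_lt).and self_mem_nhdsWithin).exists
  exact ⟨τ, hτ, hδτ⟩

variable {T : ℝ} [Fact (0 < T)]

lemma nontrivial_addCircle (T : ℝ) [Fact (0 < T)] : Nontrivial (AddCircle T) := by
  refine ⟨⟨(T / (2 : ℕ) : ℝ), 0, fun h ↦ ?_⟩⟩
  have horder := addOrderOf_period_div (p := T) two_pos
  rw [h] at horder
  simp at horder

lemma ae_im_fourier_one_ne_zero :
    ∀ᵐ x : AddCircle T ∂haarAddCircle, (fourier 1 x).im ≠ 0 := by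
  have := nontrivial_addCircle T
  refine measure_mono_null (fun x hx ↦ ?_) ((finite_torsion T two_pos).measure_zero haarAddCircle)
  replace hx : (fourier 1 x).im = 0 := not_not.1 hx
  have hreal : conj (fourier 1 x) = fourier 1 x := Complex.conj_eq_iff_im.2 hx
  rw [← fourier_neg] at hreal
  simp only [fourier_apply] at hreal
  have := injective_toCircle (Fact.out : 0 < T).ne' (Circle.ext hreal)
  simpa [two_nsmul, neg_eq_iff_add_eq_zero] using this

/-- Multiplication by `n` preserves Haar measure, which makes the bound uniform in `n`. -/
lemma exists_forall_haarAddCircle_abs_im_fourier_lt_le {δ : ℝ≥0∞} (hδ : δ ≠ 0) :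
    ∃ τ > 0, ∀ n : ℤ, n ≠ 0 →
      haarAddCircle {x : AddCircle T | |(fourier n x).im| < τ} ≤ δ := by
  have hcont : Continuous fun x : AddCircle T ↦ (fourier 1 x).im :=
    Complex.continuous_im.comp (fourier 1).continuous
  obtain ⟨τ, hτ, hle⟩ := exists_pos_measure_norm_lt_le hcont.aestronglyMeasurable
    (ae_im_fourier_one_ne_zero (T := T)) hδ
  refine ⟨τ, hτ, fun n hn ↦ ?_⟩
  have hopen : IsOpen {x : AddCircle T | ‖(fourier 1 x).im‖ < τ} :=
    isOpen_lt hcont.norm continuous_const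
  rw [← (Measure.measurePreserving_zsmul haarAddCircle hn).measure_preimage
    hopen.measurableSet.nullMeasurableSet] at hle
  simpa using hle

lemma eventually_mul_abs_mul_log_lt {φ : ℕ → ℝ} (hφ : Tendsto φ atTop (𝓝 0)) {c κ : ℝ}
    (hc : 0 < c) (hκ : 0 < κ) (A : ℝ) :
    ∀ᶠ N : ℕ in atTop, A * (|φ N| * Real.log N) < c * (κ * Real.log N - 1) := by
  have hsmall : Tendsto (fun N ↦ A * |φ N|) atTop (𝓝 0) := by simpa using hφ.abs.const_mul A
  have hlog : Tendsto (fun N : ℕ ↦ Real.log N) atTop atTop :=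
    Real.tendsto_log_atTop.comp tendsto_natCast_atTop_atTop
  filter_upwards [hsmall.eventually_lt_const (half_pos (mul_pos hc hκ)),
    hlog.eventually_gt_atTop (2 / κ)] with N hN hlogN
  have hlog0 : 0 < Real.log N := lt_trans (by positivity) hlogN
  rw [div_lt_iff₀ hκ] at hlogN
  calc A * (|φ N| * Real.log N) = A * |φ N| * Real.log N := by ring
    _ < c * κ / 2 * Real.log N := by gcongr
    _ = c * (κ * Real.log N / 2) := by ring
    _ ≤ c * (κ * Real.log N - 1) := mul_le_mul_of_nonneg_left (by linarith) hc.le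

lemma exists_widths_ae_eventually_lt {φ : ℕ → ℝ} (hφ : Tendsto φ atTop (𝓝 0)) {c : ℕ → ℝ}
    (hc : ∀ j, 0 < c j) :
    ∃ N : ℕ → ℕ, (∀ j, 2 ≤ N j) ∧ ∀ᵐ x : AddCircle T ∂haarAddCircle, ∀ᶠ j in atTop,
      j * (|φ (N j)| * Real.log (N j)) <
        c j * ((fourier (N j) x).im ^ 2 * Real.log (N j) / (6 * Real.pi) - 1) := by
  choose τ hτ hmeasure using fun j : ℕ ↦ exists_forall_haarAddCircle_abs_im_fourier_lt_le (T := T)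
    (pow_ne_zero j (ENNReal.inv_ne_zero.2 ENNReal.ofNat_ne_top : (2 : ℝ≥0∞)⁻¹ ≠ 0))
  choose N hN2 hN using fun j : ℕ ↦ ((eventually_ge_atTop 2).and (eventually_mul_abs_mul_log_lt hφ
    (hc j) (κ := τ j ^ 2 / (6 * Real.pi)) (by have := hτ j; positivity) j)).exists
  have hsummable : ∑' j, haarAddCircle {x : AddCircle T | |(fourier (N j) x).im| < τ j} ≠ ∞ := by
    refine ne_top_of_le_ne_top ?_ (ENNReal.tsum_le_tsum fun j ↦
      hmeasure j (N j) (by have := hN2 j; omega))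
    rw [ENNReal.tsum_geometric]
    simp
  refine ⟨N, hN2, ?_⟩
  filter_upwards [ae_eventually_notMem hsummable] with x hx
  filter_upwards [hx] with j hxj
  have hsq : τ j ^ 2 ≤ (fourier (N j) x).im ^ 2 := by
    rw [← sq_abs (Complex.im _)]
    exact pow_le_pow_left₀ (hτ j).le (not_lt.1 hxj) 2
  refine (hN j).trans_le ?_
  rw [div_mul_eq_mul_div]
  have := (hc j).le
  gcongr

end ExceptionalSets

lemma exists_integrable_forall_exists_le_norm_fourierPartialSum_sub {c : ℕ → ℝ}
    (hc0 : ∀ j, 0 ≤ c j) (hc : Summable c) (N : ℕ → ℕ) (hN : ∀ j, N j ≠ 0) :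
    ∃ f : AddCircle (1 : ℝ) → ℝ, Integrable f haarAddCircle ∧ ∀ x j, ∃ p : ℕ,
      c j * ((fourier (N j) x).im ^ 2 * Real.log (N j) / (6 * Real.pi) - 1) ≤
        ‖fourierPartialSum (fun t ↦ (f t : ℂ)) (p + N j) x -
          fourierPartialSum (fun t ↦ (f t : ℂ)) p x‖ := by
  have (j : ℕ) : NeZero (N j) := ⟨hN j⟩
  choose P L hP hnorm hband hlarge using fun j ↦ exists_forall_exists_le_abs_re_fourierWindow (N j)
  let M : ℕ → ℤ := fun j ↦ bandCenter L j + 1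
  have hc' : Summable fun j ↦ ‖(c j : ℂ)‖ := by simpa using hc.abs
  have hsep (j : ℕ) : ∀ i ≠ j, L i + L j ≤ (M i - M j).natAbs := fun i hij ↦ by
    simpa [M] using add_le_natAbs_bandCenter_sub L hij
  have hint : Integrable (modulatedSum (fun j ↦ (c j : ℂ)) M P) haarAddCircle :=
    integrable_modulatedSum hc' hP hnorm
  have hneg : ∀ k < 0, fourierCoeff (modulatedSum (fun j ↦ (c j : ℂ)) M P) k = 0 := fun k hk ↦
    fourierCoeff_modulatedSum_eq_zero hc' hP hnorm hband fun j ↦ by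
      simp only [M, bandCenter]
      omega
  refine ⟨fun x ↦ (modulatedSum (fun j ↦ (c j : ℂ)) M P x).re, hint.re, fun x j ↦ ?_⟩
  obtain ⟨n, hn, hle⟩ := hlarge j x (fourier (M j) x) (norm_fourier_apply _ _)
  have hwindow := fourierWindow_modulatedSum hc' hP hnorm hband (hsep j) hn x
  refine ⟨bandCenter L j + n, (mul_le_mul_of_nonneg_left hle (hc0 j)).trans_eq ?_⟩
  rw [fourierPartialSum_re_add_sub hint hneg, Nat.cast_add, add_right_comm, hwindow,
    Complex.re_ofReal_mul, Complex.norm_real, Real.norm_eq_abs, abs_mul, abs_of_nonneg (hc0 j)]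

/-- **Stein's refinement of Kolmogorov's divergence theorem** (Theorem 2.3 of the paper).
For any function `φ(n)` tending to `0`, there exists an integrable function `f` on the circle
such that, for almost every `x`, the estimate
`S_n f(x) - S_m f(x) = O(φ(|m-n|) log |m-n|)` fails. -/
theorem kolmogorov_stein_divergence
    (φ : ℕ → ℝ) (hφ : Tendsto φ atTop (nhds 0)) :
    ∃ f : AddCircle (1:ℝ) → ℝ, Integrable f haarAddCircle ∧
      ∀ᵐ x ∂(haarAddCircle : Measure (AddCircle (1:ℝ))),
        ¬ ∃ C : ℝ, ∀ m n : ℕ, 2 ≤ ((n:ℤ) - (m:ℤ)).natAbs →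
          ‖fourierPartialSum (fun t => (f t : ℂ)) n x -
              fourierPartialSum (fun t => (f t : ℂ)) m x‖
            ≤ C * φ (((n:ℤ) - (m:ℤ)).natAbs) * Real.log (((n:ℤ) - (m:ℤ)).natAbs) := by
  have hpos (j : ℕ) : (0 : ℝ) < (1 / 2) ^ j := by positivity
  obtain ⟨N, hN2, hN⟩ := exists_widths_ae_eventually_lt (T := 1) hφ hpos
  obtain ⟨f, hf, hlarge⟩ := exists_integrable_forall_exists_le_norm_fourierPartialSum_sub
    (fun j ↦ (hpos j).le) summable_geometric_two N fun j ↦ (zero_lt_two.trans_le (hN2 j)).ne'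
  refine ⟨f, hf, ?_⟩
  filter_upwards [hN] with x hx
  rintro ⟨C, hC⟩
  obtain ⟨j, hj, hCj⟩ :=
    (hx.and (tendsto_natCast_atTop_atTop.eventually_ge_atTop |C|)).exists
  obtain ⟨p, hp⟩ := hlarge x j
  have hgap : (((p + N j : ℕ) : ℤ) - p).natAbs = N j := by omega
  have hbound := hC p (p + N j) (by rw [hgap]; exact hN2 j)
  rw [hgap] at hbound
  have hup : C * φ (N j) * Real.log (N j) ≤ j * (|φ (N j)| * Real.log (N j)) := by
    rw [← mul_assoc]
    refine mul_le_mul_of_nonneg_right ((le_abs_self _).trans ?_) (Real.log_natCast_nonneg _)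
    rw [abs_mul]
    gcongr
  linarith
end

section
/- There exists an absolute constant C > 0 such that for every integer k ≥ 2 there is a finite Borel measure ν on 𝕋 with total variation ∫_𝕋 |dν| = 1 such that for almost every x ∈ 𝕋, sup{|S_n ν(x) − S_m ν(x)| : n, m ≥ 0, |n − m| = k} ≥ C log k. -/
/-!
Take `ν` to be the uniform measure on `N = 4k` points `x i`, so that
`S_{m+k} ν(ξ) - S_m ν(ξ) = (2 / N) ∑ᵢ Re (e(m tᵢ) P(tᵢ))`, where `tᵢ = ξ - x i`,
`e(t) = exp(2πit)` and `P(t) = e(t) + e(2t) + ⋯ + e(kt)`.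

If the `tᵢ` are linearly independent over `ℤ` in `ℝ/ℤ`, then Kronecker's theorem provides an `m` for
which all the terms `e(m tᵢ) P(tᵢ)` are almost real and positive, so the supremum over `m` is
`(2 / N) ∑ᵢ |P(tᵢ)|`. Kronecker's theorem itself is unique ergodicity: an invariant probability
measure of the translation by `t` has the Fourier coefficients of Haar measure, hence Haar measure
is the only one and so an extreme one, hence it is ergodic and orbits are dense.

Almost every tuple of points is independent, so the `x i` can be chosen independent and
`1 / N`-dense, and then the `ξ - x i` are independent for almost every `ξ`. For every `ξ` and every
`l < k`, some `tᵢ` is within `1 / (4k)` of the midpoint of `[l / k, (l + 1) / k]`, where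
`|P(t)| = |e(kt) - 1| / |e(t) - 1|` is at least `k / (2π(l + 1))`. Summing over `l` gives
`∑ᵢ |P(tᵢ)| ≥ (k / 2π) log k`.
-/

open MeasureTheory Filter AddCircle
open scoped ENNReal

/-- The `j`-th Fourier–Stieltjes coefficient `ν̂(j) = ∫ e^{-2πijt} ν(dt)` of a finite
(signed) Borel measure `ν` on the circle, computed via the Jordan decomposition. -/
noncomputable def fourierStieltjesCoeff (ν : SignedMeasure (AddCircle (1:ℝ))) (j : ℤ) : ℂ :=
  (∫ t, (fourier (-j) t : ℂ) ∂ν.toJordanDecomposition.posPart) -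
    ∫ t, (fourier (-j) t : ℂ) ∂ν.toJordanDecomposition.negPart

/-- The `n`-th symmetric partial sum of the Fourier–Stieltjes series of `ν`:
`S_n ν (x) = ∑_{|j| ≤ n} ν̂(j) e^{2πijx}`. -/
noncomputable def fourierStieltjesPartialSum (ν : SignedMeasure (AddCircle (1:ℝ))) (n : ℕ)
    (x : AddCircle (1:ℝ)) : ℂ :=
  ∑ j ∈ Finset.Icc (-(n:ℤ)) (n:ℤ), fourierStieltjesCoeff ν j * fourier j x

open UnitAddTorus (mFourier mFourierSubalgebra)
open scoped Real

instance : IsProbabilityMeasure (volume : Measure UnitAddCircle) := ⟨UnitAddCircle.measure_univ⟩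

instance : Nontrivial UnitAddCircle := (ZMod.toAddCircle_injective 2).nontrivial

section Character

variable {ι : Type*} [Fintype ι]

theorem measure_ext_of_integral_mFourier {μ ν : Measure (UnitAddTorus ι)} [IsFiniteMeasure μ]
    [IsFiniteMeasure ν] (h : ∀ n, ∫ x, mFourier n x ∂μ = ∫ x, mFourier n x ∂ν) : μ = ν := by
  have hint (μ : Measure (UnitAddTorus ι)) [IsFiniteMeasure μ] (f : C(UnitAddTorus ι, ℂ)) :
      Integrable f μ := f.continuous.integrable_of_hasCompactSupport (.of_compactSpace f)
  have hspan (f : C(UnitAddTorus ι, ℂ)) (hf : f ∈ Submodule.span ℂ (Set.range mFourier)) :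
      ∫ x, f x ∂μ = ∫ x, f x ∂ν := by
    induction hf using Submodule.span_induction with
    | mem f hf =>
      obtain ⟨n, rfl⟩ := hf
      exact h n
    | zero => simp
    | add f₁ f₂ _ _ h₁ h₂ =>
      simp only [ContinuousMap.add_apply]
      rw [integral_add (hint μ f₁) (hint μ f₂), integral_add (hint ν f₁) (hint ν f₂), h₁, h₂]
    | smul c f _ hf =>
      simp only [ContinuousMap.smul_apply]
      rw [integral_smul, integral_smul, hf]
  refine ext_of_forall_mem_subalgebra_integral_eq_of_polish (𝕜 := ℂ)
    (A := (mFourierSubalgebra ι).comap (BoundedContinuousFunction.toContinuousMapStarₐ ℂ)) ?_ ?_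
  · intro x y hxy
    obtain ⟨_, ⟨f, hf, rfl⟩, hfxy⟩ := UnitAddTorus.mFourierSubalgebra_separatesPoints hxy
    exact ⟨f, ⟨f, ⟨BoundedContinuousFunction.mkOfCompact f, hf, rfl⟩, rfl⟩, hfxy⟩
  · intro g hg
    refine hspan g ?_
    rw [← UnitAddTorus.mFourierSubalgebra_coe]
    exact hg

theorem mFourier_eq_toCircle (n : ι → ℤ) (x : UnitAddTorus ι) :
    mFourier n x = toCircle (∑ i, n i • x i) := by
  have hsum : toCircle (∑ i, n i • x i) = ∏ i, toCircle (n i • x i) :=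
    map_sum toCircle_addChar.toAddMonoidHom (fun i ↦ n i • x i) Finset.univ
  rw [hsum]
  exact (map_prod Circle.coeHom _ _).symm

theorem mFourier_add (n : ι → ℤ) (x y : UnitAddTorus ι) :
    mFourier n (x + y) = mFourier n x * mFourier n y := by
  simp_rw [mFourier_eq_toCircle, ← Circle.coe_mul, ← toCircle_add, Pi.add_apply, smul_add,
    Finset.sum_add_distrib]

theorem mFourier_ne_one_of_linearIndependent {t : UnitAddTorus ι} (ht : LinearIndependent ℤ t)
    {n : ι → ℤ} (hn : n ≠ 0) : mFourier n t ≠ 1 := by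
  rw [mFourier_eq_toCircle, Ne, Circle.coe_eq_one, ← toCircle_zero (T := 1),
    (injective_toCircle one_ne_zero).eq_iff]
  exact fun h ↦ hn <| funext <| Fintype.linearIndependent_iff.1 ht n h

theorem integral_mFourier_eq_zero_of_measurePreserving {t : UnitAddTorus ι}
    {μ : Measure (UnitAddTorus ι)} (hμ : MeasurePreserving (t + ·) μ μ) {n : ι → ℤ}
    (hn : mFourier n t ≠ 1) : ∫ x, mFourier n x ∂μ = 0 := by
  have hinv := hμ.integral_comp (measurableEmbedding_addLeft t) (mFourier n)
  simp only [mFourier_add, integral_const_mul] at hinv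
  exact eq_zero_of_mul_eq_self_left hn hinv

theorem eq_volume_of_measurePreserving_add_left {t : UnitAddTorus ι} (ht : LinearIndependent ℤ t)
    {μ : Measure (UnitAddTorus ι)} [IsProbabilityMeasure μ] (hμ : MeasurePreserving (t + ·) μ μ) :
    μ = volume := by
  refine measure_ext_of_integral_mFourier fun n ↦ ?_
  rcases eq_or_ne n 0 with rfl | hn
  · simp [UnitAddTorus.mFourier_zero]
  · have hnt := mFourier_ne_one_of_linearIndependent ht hn
    rw [integral_mFourier_eq_zero_of_measurePreserving hμ hnt,
      integral_mFourier_eq_zero_of_measurePreserving (measurePreserving_add_left volume t) hnt]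

end Character

theorem denseRange_nsmul_of_linearIndependent {ι : Type*} [Finite ι] {t : UnitAddTorus ι}
    (ht : LinearIndependent ℤ t) : DenseRange (fun m : ℕ ↦ m • t) := by
  have := Fintype.ofFinite ι
  have hunique : {μ : Measure (UnitAddTorus ι) | MeasurePreserving (t + ·) μ μ ∧
      IsProbabilityMeasure μ} = {volume} := by
    refine Set.eq_singleton_iff_unique_mem.2
      ⟨⟨measurePreserving_add_left volume t, inferInstance⟩, fun μ hμ ↦ ?_⟩
    have := hμ.2
    exact eq_volume_of_measurePreserving_add_left ht hμ.1
  have hergodic : Ergodic (t + ·) (volume : Measure (UnitAddTorus ι)) :=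
    .of_mem_extremePoints (by rw [hunique, extremePoints_singleton]; rfl)
  exact denseRange_zsmul_iff_nsmul.1 (.zsmul_of_ergodic_add_left hergodic)

theorem exists_toCircle_mul_eq_norm (z : ℂ) : ∃ s : UnitAddCircle, toCircle s * z = ‖z‖ := by
  obtain ⟨s, hs⟩ := (homeomorphCircle one_ne_zero).surjective (Circle.exp (-z.arg))
  rw [homeomorphCircle_apply] at hs
  refine ⟨s, ?_⟩
  calc (toCircle s * z : ℂ) = Complex.exp (-(z.arg * Complex.I)) *
        (‖z‖ * Complex.exp (z.arg * Complex.I)) := by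
        rw [hs, Circle.coe_exp, Complex.norm_mul_exp_arg_mul_I, Complex.ofReal_neg, neg_mul]
    _ = ‖z‖ := by rw [mul_left_comm, ← Complex.exp_add, neg_add_cancel, Complex.exp_zero, mul_one]

theorem exists_lt_sum_re_fourier_mul {ι : Type*} [Fintype ι] {t : UnitAddTorus ι}
    (ht : LinearIndependent ℤ t) (z : ι → ℂ) {B : ℝ} (hB : B < ∑ i, ‖z i‖) :
    ∃ m : ℕ, B < ∑ i, (fourier m (t i) * z i).re := by
  have hopen : IsOpen {s : UnitAddTorus ι | B < ∑ i, (toCircle (s i) * z i).re} :=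
    isOpen_lt continuous_const <| continuous_finsetSum _ fun i _ ↦ Complex.continuous_re.comp <|
      (continuous_subtype_val.comp (continuous_toCircle.comp (continuous_apply i))).mul
        continuous_const
  have hnonempty : {s : UnitAddTorus ι | B < ∑ i, (toCircle (s i) * z i).re}.Nonempty := by
    choose s hs using fun i ↦ exists_toCircle_mul_eq_norm (z i)
    exact ⟨s, by simpa only [Set.mem_ofPred_eq, hs, Complex.ofReal_re] using hB⟩
  obtain ⟨m, hm⟩ := (denseRange_nsmul_of_linearIndependent ht).exists_mem_open hopen hnonempty
  exact ⟨m, by simpa [fourier_apply] using hm⟩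

theorem ae_map_ne_of_surjective {G H : Type*} [TopologicalSpace G] [AddGroup G]
    [IsTopologicalAddGroup G] [MeasurableSpace G] [BorelSpace G] [AddGroup H] [TopologicalSpace H]
    [IsTopologicalAddGroup H] [CompactSpace H] [MeasurableSpace H] [BorelSpace H] {μ : Measure G}
    [μ.IsAddHaarMeasure] {ν : Measure H} [ν.IsAddHaarMeasure] [NullSingletonClass ν] {f : G →+ H}
    (hf : Continuous f) (hsurj : Function.Surjective f) (hμν : μ Set.univ = ν Set.univ) (a : H) :
    ∀ᵐ x ∂μ, f x ≠ a :=
  (f.measurePreserving hf hsurj hμν).quasiMeasurePreserving.ae (ν.ae_ne a)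

theorem ae_linearIndependent (ι : Type*) [Fintype ι] :
    ∀ᵐ x : UnitAddTorus ι, LinearIndependent ℤ x := by
  have hsum (n : ι → ℤ) (hn : n ≠ 0) : ∀ᵐ x : UnitAddTorus ι, ∑ i, n i • x i ≠ 0 := by
    classical
    obtain ⟨i, hi⟩ := Function.ne_iff.1 hn
    let f : UnitAddTorus ι →+ UnitAddCircle := AddMonoidHom.mk' (fun x ↦ ∑ i, n i • x i) <| by
      simp [smul_add, Finset.sum_add_distrib]
    have hsurj : Function.Surjective f := fun y ↦
      ⟨Pi.single i (DivisibleBy.div y (n i)), by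
        simp [f, Pi.single_apply, DivisibleBy.div_cancel y hi]⟩
    refine ae_map_ne_of_surjective (f := f) (ν := volume) ?_ hsurj (by simp) 0
    exact continuous_finsetSum _ fun i _ ↦ (continuous_apply i).zsmul (n i)
  filter_upwards [ae_all_iff.2 fun n ↦ eventually_imp_distrib_left.2 (hsum n)] with x hx
  refine Fintype.linearIndependent_iff.2 fun n hn ↦ congr_fun ?_
  by_contra hne
  exact hx n hne hn

theorem ae_linearIndependent_sub {ι : Type*} [Finite ι] {x : ι → UnitAddCircle}
    (hx : LinearIndependent ℤ x) :
    ∀ᵐ ξ ∂(haarAddCircle : Measure UnitAddCircle), LinearIndependent ℤ (fun i ↦ ξ - x i) := by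
  have := Fintype.ofFinite ι
  have hsmul (c : ℤ) (hc : c ≠ 0) (a : UnitAddCircle) :
      ∀ᵐ ξ ∂(haarAddCircle : Measure UnitAddCircle), c • ξ ≠ a :=
    ae_map_ne_of_surjective (f := zsmulAddGroupHom c) (ν := haarAddCircle) (continuous_zsmul c)
      (DivisibleBy.surjective_smul UnitAddCircle ℤ hc) rfl a
  filter_upwards [ae_all_iff.2 fun n : ι → ℤ ↦
    eventually_imp_distrib_left.2 fun hn ↦ hsmul (∑ i, n i) hn (∑ i, n i • x i)] with ξ hξ
  refine Fintype.linearIndependent_iff.2 fun n hn ↦ ?_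
  simp_rw [smul_sub, Finset.sum_sub_distrib, ← Finset.sum_smul] at hn
  rcases eq_or_ne (∑ i, n i) 0 with h0 | h0
  · refine Fintype.linearIndependent_iff.1 hx n ?_
    simpa [h0] using hn
  · exact absurd (sub_eq_zero.1 hn) (hξ n h0)

theorem exists_norm_sub_toAddCircle_le (N : ℕ) [NeZero N] (η : UnitAddCircle) :
    ∃ j : ZMod N, ‖η - ZMod.toAddCircle j‖ ≤ 1 / (2 * N) := by
  obtain ⟨η, rfl⟩ := QuotientAddGroup.mk_surjective η
  have hN : (0 : ℝ) < N := by exact_mod_cast NeZero.pos N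
  refine ⟨(round (N * η) : ℤ), ?_⟩
  rw [ZMod.toAddCircle_intCast]
  calc ‖((η - round (N * η) / N : ℝ) : UnitAddCircle)‖ ≤ |η - round (N * η) / N| :=
        QuotientAddGroup.norm_mk_le_norm
    _ = |N * η - round (N * η)| / N := by
        rw [← abs_of_pos hN, ← abs_div, abs_of_pos hN, sub_div, mul_div_cancel_left₀ _ hN.ne']
    _ ≤ 1 / 2 / N := by gcongr; exact abs_sub_round _
    _ = 1 / (2 * N) := by rw [div_div]

theorem exists_linearIndependent_net (N : ℕ) [NeZero N] :
    ∃ x : ZMod N → UnitAddCircle, LinearIndependent ℤ x ∧ ∀ η, ∃ i, ‖η - x i‖ ≤ 1 / N := by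
  have hN : (0 : ℝ) < N := by exact_mod_cast NeZero.pos N
  obtain ⟨x, hx, hdist⟩ := (Measure.dense_of_ae (ae_linearIndependent (ZMod N))).exists_dist_lt
    (ZMod.toAddCircle (N := N)) (show (0 : ℝ) < 1 / (2 * N) by positivity)
  refine ⟨x, hx, fun η ↦ ?_⟩
  obtain ⟨j, hj⟩ := exists_norm_sub_toAddCircle_le N η
  refine ⟨j, ?_⟩
  calc ‖η - x j‖ ≤ ‖η - ZMod.toAddCircle j‖ + ‖ZMod.toAddCircle j - x j‖ :=
        norm_sub_le_norm_sub_add_norm_sub ..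
    _ ≤ 1 / (2 * N) + 1 / (2 * N) := by
      gcongr
      rw [← dist_eq_norm]
      exact (dist_le_pi_dist _ _ j).trans hdist.le
    _ = 1 / N := by field_simp; norm_num

/-- The Dirichlet kernel `D_n(t) = ∑_{|j| ≤ n} e^{2πijt}` on `ℝ/ℤ`. -/
noncomputable def dirichletKernel (n : ℕ) (t : UnitAddCircle) : ℂ :=
  ∑ j ∈ Finset.Icc (-(n : ℤ)) n, fourier j t

/-- The one-sided kernel `∑_{1 ≤ j ≤ k} e^{2πijt}`, whose modulations are the analytic halves of the
differences of Dirichlet kernels. The frequency `0` is left out, so the sum runs over `j + 1`. -/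
noncomputable def analyticDirichletKernel (k : ℕ) (t : UnitAddCircle) : ℂ :=
  ∑ j ∈ Finset.range k, fourier (j + 1) t

theorem dirichletKernel_succ (n : ℕ) (t : UnitAddCircle) :
    dirichletKernel (n + 1) t = dirichletKernel n t + (2 * (fourier (n + 1) t).re : ℝ) := by
  rw [dirichletKernel, Nat.cast_succ, Finset.sum_Icc_succ_eq_add_endpoints, fourier_neg,
    dirichletKernel, ← Complex.add_conj]
  ring

theorem dirichletKernel_add_sub (m k : ℕ) (t : UnitAddCircle) :
    dirichletKernel (m + k) t - dirichletKernel m t =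
      (2 * (fourier m t * analyticDirichletKernel k t).re : ℝ) := by
  induction k with
  | zero => simp [analyticDirichletKernel]
  | succ k ih =>
    rw [← add_assoc, dirichletKernel_succ, add_sub_right_comm, ih, analyticDirichletKernel,
      analyticDirichletKernel, Finset.sum_range_succ, mul_add, Complex.add_re, mul_add,
      Complex.ofReal_add, ← fourier_add]
    push_cast
    rw [add_assoc (m : ℤ)]

theorem analyticDirichletKernel_mul_toCircle_sub_one (k : ℕ) (t : UnitAddCircle) :
    analyticDirichletKernel k t * (toCircle t - 1) = toCircle t * (toCircle (k • t) - 1) := by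
  have hpow (j : ℕ) : fourier (j + 1) t = (toCircle t * toCircle t ^ j : ℂ) := by
    rw [← pow_succ', fourier_apply, ← Circle.coe_pow, ← toCircle_nsmul, ← natCast_zsmul,
      Nat.cast_succ]
  simp_rw [analyticDirichletKernel, hpow, ← Finset.mul_sum, mul_assoc, geom_sum_mul,
    toCircle_nsmul, Circle.coe_pow]

theorem norm_toCircle_sub_one (t : UnitAddCircle) :
    ‖(toCircle t - 1 : ℂ)‖ = 2 * |Real.sin (π * ‖t‖)| := by
  obtain ⟨t, rfl⟩ := QuotientAddGroup.mk_surjective t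
  have hsin : |Real.sin (π * (t - round t))| = |Real.sin (π * t)| := by
    rw [mul_sub, mul_comm π (round t : ℝ), Real.sin_sub_int_mul_pi, abs_mul,
      abs_zpow, abs_neg, abs_one, one_zpow, one_mul]
  calc ‖(toCircle (t : UnitAddCircle) - 1 : ℂ)‖
      = ‖Complex.exp (Complex.I * (2 * π * t : ℝ)) - 1‖ := by
        rw [toCircle_apply_mk, Circle.coe_exp, div_one, mul_comm Complex.I]
    _ = 2 * |Real.sin (π * t)| := by
        rw [Complex.norm_exp_I_mul_ofReal_sub_one, norm_mul, Real.norm_ofNat, Real.norm_eq_abs,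
          mul_assoc, mul_div_cancel_left₀ _ two_ne_zero]
    _ = 2 * |Real.sin (π * ‖(t : UnitAddCircle)‖)| := by
        rw [UnitAddCircle.norm_eq, ← hsin]
        rcases abs_choice (t - round t) with h | h <;> rw [h]
        rw [mul_neg, Real.sin_neg, abs_neg]

theorem four_mul_norm_le_norm_toCircle_sub_one (t : UnitAddCircle) :
    4 * ‖t‖ ≤ ‖(toCircle t - 1 : ℂ)‖ := by
  have ht : ‖t‖ ≤ 1 / 2 := by simpa using norm_le_half_period 1 one_ne_zero (x := t)
  have habs : |π * ‖t‖| = π * ‖t‖ := abs_of_nonneg (by positivity)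
  have hjordan : 2 / π * |π * ‖t‖| ≤ |Real.sin (π * ‖t‖)| :=
    Real.mul_abs_le_abs_sin (by rw [habs]; nlinarith [Real.pi_pos])
  calc 4 * ‖t‖ = 2 * (2 / π * |π * ‖t‖|) := by rw [habs]; field_simp; ring
    _ ≤ 2 * |Real.sin (π * ‖t‖)| := by gcongr
    _ = _ := (norm_toCircle_sub_one t).symm

theorem norm_toCircle_sub_one_le (t : UnitAddCircle) :
    ‖(toCircle t - 1 : ℂ)‖ ≤ 2 * π * ‖t‖ := by
  rw [norm_toCircle_sub_one, mul_assoc]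
  gcongr
  exact Real.abs_sin_le_abs.trans_eq (abs_of_nonneg (by positivity))

theorem two_mul_norm_nsmul_le (k : ℕ) (t : UnitAddCircle) :
    2 * ‖k • t‖ ≤ π * ‖t‖ * ‖analyticDirichletKernel k t‖ := by
  have hprod := congr_arg norm (analyticDirichletKernel_mul_toCircle_sub_one k t)
  rw [norm_mul, norm_mul, Circle.norm_coe, one_mul] at hprod
  have hmul := mul_le_mul_of_nonneg_left (norm_toCircle_sub_one_le t)
    (norm_nonneg (analyticDirichletKernel k t))
  linarith [four_mul_norm_le_norm_toCircle_sub_one (k • t)]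

theorem one_div_le_norm_toAddCircle {N : ℕ} [NeZero N] {j : ZMod N} (hj : j ≠ 0) :
    1 / N ≤ ‖ZMod.toAddCircle j‖ := by
  have hN : (0 : ℝ) < N := by exact_mod_cast NeZero.pos N
  have hsmul : N • ZMod.toAddCircle j = 0 := by rw [← map_nsmul]; simp
  have hle := le_add_order_smul_norm_of_isOfFinAddOrder (p := 1)
    (isOfFinAddOrder_iff_nsmul_eq_zero.2 ⟨N, NeZero.pos N, hsmul⟩)
    (ZMod.toAddCircle_eq_zero.not.2 hj)
  rw [div_le_iff₀' hN]
  refine hle.trans ?_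
  rw [nsmul_eq_mul]
  gcongr
  exact addOrderOf_le_of_nsmul_eq_zero (NeZero.pos N) hsmul

/-- The midpoint of the arc `[l / k, (l + 1) / k]` of `ℝ/ℤ`. Near it the numerator of the geometric
sum `(e^{2πikt} - 1) / (e^{2πit} - 1)` stays away from `0`. For `k = 0` this is the junk
value `0`. -/
noncomputable def arcMidpoint (k l : ℕ) : UnitAddCircle := ((l + 1 / 2) / k : ℝ)

theorem norm_arcMidpoint_le (k l : ℕ) : ‖arcMidpoint k l‖ ≤ (l + 1 / 2) / k :=
  QuotientAddGroup.norm_mk_le_norm.trans_eq (Real.norm_of_nonneg (by positivity))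

theorem norm_nsmul_arcMidpoint {k : ℕ} (hk : k ≠ 0) (l : ℕ) : ‖k • arcMidpoint k l‖ = 1 / 2 := by
  have hl : ((l : ℝ) : UnitAddCircle) = 0 := (coe_eq_zero_iff 1).2 ⟨l, by simp⟩
  rw [arcMidpoint, ← coe_nsmul, nsmul_eq_mul, mul_div_cancel₀ _ (Nat.cast_ne_zero.2 hk), coe_add,
    hl, zero_add, norm_half_period_eq, abs_one]

theorem one_div_le_norm_arcMidpoint_sub {k l l' : ℕ} (hl : l < k) (hl' : l' < k) (hne : l ≠ l') :
    1 / k ≤ ‖arcMidpoint k l - arcMidpoint k l'‖ := by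
  have : NeZero k := ⟨by omega⟩
  have hsub : arcMidpoint k l - arcMidpoint k l' = ZMod.toAddCircle (l - l' : ZMod k) := by
    rw [map_sub, ZMod.toAddCircle_natCast, ZMod.toAddCircle_natCast, arcMidpoint, arcMidpoint,
      ← coe_sub, ← coe_sub]
    congr 1
    ring
  rw [hsub]
  refine one_div_le_norm_toAddCircle (sub_ne_zero.2 fun h ↦ hne ?_)
  rwa [ZMod.natCast_eq_natCast_iff', Nat.mod_eq_of_lt hl, Nat.mod_eq_of_lt hl'] at h

theorem eq_of_norm_sub_arcMidpoint_le {k l l' : ℕ} (hl : l < k) (hl' : l' < k)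
    {t : UnitAddCircle} (ht : ‖t - arcMidpoint k l‖ ≤ 1 / (4 * k))
    (ht' : ‖t - arcMidpoint k l'‖ ≤ 1 / (4 * k)) : l = l' := by
  have hk : (0 : ℝ) < k := by exact_mod_cast hl.pos
  by_contra hne
  have : (1 : ℝ) / k ≤ 1 / (2 * k) :=
    calc (1 : ℝ) / k ≤ ‖arcMidpoint k l - arcMidpoint k l'‖ :=
          one_div_le_norm_arcMidpoint_sub hl hl' hne
      _ = ‖(t - arcMidpoint k l') - (t - arcMidpoint k l)‖ := by rw [sub_sub_sub_cancel_left]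
      _ ≤ 1 / (4 * k) + 1 / (4 * k) := norm_sub_le_of_le ht' ht
      _ = 1 / (2 * k) := by field_simp; norm_num
  rw [div_le_div_iff_of_pos_left one_pos hk (by positivity)] at this
  linarith

theorem le_norm_analyticDirichletKernel {k : ℕ} (hk : k ≠ 0) (l : ℕ) {t : UnitAddCircle}
    (ht : ‖t - arcMidpoint k l‖ ≤ 1 / (4 * k)) :
    k / (2 * π) * (l + 1 : ℝ)⁻¹ ≤ ‖analyticDirichletKernel k t‖ := by
  have hk' : (0 : ℝ) < k := by positivity
  have hnorm : ‖t‖ ≤ (l + 1) / k :=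
    calc ‖t‖ ≤ ‖t - arcMidpoint k l‖ + ‖arcMidpoint k l‖ := norm_le_norm_sub_add _ _
      _ ≤ 1 / (4 * k) + (l + 1 / 2) / k := add_le_add ht (norm_arcMidpoint_le k l)
      _ ≤ (l + 1) / k := by field_simp; linarith
  have hdist : ‖k • arcMidpoint k l - k • t‖ ≤ 1 / 4 :=
    calc ‖k • arcMidpoint k l - k • t‖ = ‖k • (t - arcMidpoint k l)‖ := by
          rw [norm_sub_rev, smul_sub]
      _ ≤ k * (1 / (4 * k)) := norm_nsmul_le.trans (by gcongr)
      _ = 1 / 4 := by field_simp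
  have hnsmul : 1 / 4 ≤ ‖k • t‖ := by
    have := norm_sub_norm_le (k • arcMidpoint k l) (k • t)
    rw [norm_nsmul_arcMidpoint hk] at this
    linarith
  have hhalf : 1 / 2 ≤ π * ((l + 1) / k) * ‖analyticDirichletKernel k t‖ :=
    calc (1 / 2 : ℝ) ≤ 2 * ‖k • t‖ := by linarith
      _ ≤ π * ‖t‖ * ‖analyticDirichletKernel k t‖ := two_mul_norm_nsmul_le k t
      _ ≤ π * ((l + 1) / k) * ‖analyticDirichletKernel k t‖ := by gcongr
  calc k / (2 * π) * (l + 1 : ℝ)⁻¹ = (π * ((l + 1) / k))⁻¹ * (1 / 2) := by field_simp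
    _ ≤ ‖analyticDirichletKernel k t‖ := (inv_mul_le_iff₀ (by positivity)).2 hhalf

theorem mul_log_le_sum_norm_analyticDirichletKernel {ι : Type*} [Fintype ι] {k : ℕ} (hk : k ≠ 0)
    {x : ι → UnitAddCircle} (hx : ∀ η, ∃ i, ‖η - x i‖ ≤ 1 / (4 * k)) (ξ : UnitAddCircle) :
    k / (2 * π) * Real.log (k + 1) ≤ ∑ i, ‖analyticDirichletKernel k (ξ - x i)‖ := by
  classical
  choose i hi using fun l : ℕ ↦ hx (ξ - arcMidpoint k l)
  simp_rw [sub_right_comm ξ] at hi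
  have hinj : Set.InjOn i (Finset.range k) := fun l hl l' hl' h ↦
    eq_of_norm_sub_arcMidpoint_le (Finset.mem_range.1 hl) (Finset.mem_range.1 hl') (hi l)
      (h ▸ hi l')
  calc k / (2 * π) * Real.log (k + 1)
      ≤ k / (2 * π) * ∑ l ∈ Finset.range k, (l + 1 : ℝ)⁻¹ := by
        gcongr
        simpa [harmonic] using log_add_one_le_harmonic k
    _ ≤ ∑ l ∈ Finset.range k, ‖analyticDirichletKernel k (ξ - x (i l))‖ := by
        rw [Finset.mul_sum]
        exact Finset.sum_le_sum fun l _ ↦ le_norm_analyticDirichletKernel hk l (hi l)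
    _ = ∑ j ∈ (Finset.range k).image i, ‖analyticDirichletKernel k (ξ - x j)‖ :=
        (Finset.sum_image (f := fun j ↦ ‖analyticDirichletKernel k (ξ - x j)‖) hinj).symm
    _ ≤ ∑ j, ‖analyticDirichletKernel k (ξ - x j)‖ :=
        Finset.sum_le_univ_sum_of_nonneg fun _ ↦ norm_nonneg _

theorem mul_log_lt_mul_sum_norm_analyticDirichletKernel {k : ℕ} [NeZero k]
    {x : ZMod (4 * k) → UnitAddCircle} (hx : ∀ η, ∃ i, ‖η - x i‖ ≤ 1 / (4 * k : ℕ))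
    (ξ : UnitAddCircle) :
    1 / (4 * π) * Real.log k <
      2 / Fintype.card (ZMod (4 * k)) * ∑ i, ‖analyticDirichletKernel k (ξ - x i)‖ := by
  have hk : (0 : ℝ) < k := by exact_mod_cast NeZero.pos k
  calc 1 / (4 * π) * Real.log k < 1 / (4 * π) * Real.log (k + 1) := by
        gcongr
        exact lt_add_one _
    _ = 2 / Fintype.card (ZMod (4 * k)) * (k / (2 * π) * Real.log (k + 1)) := by
        rw [ZMod.card]
        push_cast
        field_simp
    _ ≤ 2 / Fintype.card (ZMod (4 * k)) * ∑ i, ‖analyticDirichletKernel k (ξ - x i)‖ := by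
        gcongr
        exact mul_log_le_sum_norm_analyticDirichletKernel (NeZero.ne k) (by simpa using hx) ξ

/-- The empirical measure of a finite family of points: the uniform probability measure on the
points `x i`, counted with multiplicity. -/
noncomputable def empiricalMeasure {ι α : Type*} [Fintype ι] [MeasurableSpace α] (x : ι → α) :
    Measure α :=
  (Fintype.card ι : ℝ≥0∞)⁻¹ • ∑ i, Measure.dirac (x i)

instance {ι α : Type*} [Fintype ι] [Nonempty ι] [MeasurableSpace α] (x : ι → α) :
    IsProbabilityMeasure (empiricalMeasure x) :=
  ⟨by simp [empiricalMeasure, ENNReal.inv_mul_cancel]⟩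

theorem integral_empiricalMeasure {ι α E : Type*} [Fintype ι] [MeasurableSpace α]
    [MeasurableSingletonClass α] [NormedAddCommGroup E] [NormedSpace ℝ E] [CompleteSpace E]
    (x : ι → α) (f : α → E) :
    ∫ a, f a ∂empiricalMeasure x = (Fintype.card ι : ℝ)⁻¹ • ∑ i, f (x i) := by
  rw [empiricalMeasure, integral_smul_measure,
    integral_finsetSum_measure fun i _ ↦ integrable_dirac (by simp)]
  simp

theorem toJordanDecomposition_toSignedMeasure {α : Type*} [MeasurableSpace α] (μ : Measure α)
    [IsFiniteMeasure μ] :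
    μ.toSignedMeasure.toJordanDecomposition = ⟨μ, 0, .zero_right⟩ :=
  SignedMeasure.toJordanDecomposition_eq (by simp [JordanDecomposition.toSignedMeasure])

theorem totalVariation_toSignedMeasure {α : Type*} [MeasurableSpace α] (μ : Measure α)
    [IsFiniteMeasure μ] : μ.toSignedMeasure.totalVariation = μ := by
  rw [SignedMeasure.totalVariation, toJordanDecomposition_toSignedMeasure, add_zero]

theorem fourierStieltjesCoeff_toSignedMeasure (μ : Measure UnitAddCircle) [IsFiniteMeasure μ]
    (j : ℤ) : fourierStieltjesCoeff μ.toSignedMeasure j = ∫ t, fourier (-j) t ∂μ := by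
  rw [fourierStieltjesCoeff, toJordanDecomposition_toSignedMeasure, integral_zero_measure, sub_zero]

section EmpiricalMeasure

variable {ι : Type*} [Fintype ι] [Nonempty ι] (x : ι → UnitAddCircle)

theorem fourierStieltjesPartialSum_empiricalMeasure (n : ℕ) (ξ : UnitAddCircle) :
    fourierStieltjesPartialSum (empiricalMeasure x).toSignedMeasure n ξ =
      (Fintype.card ι : ℂ)⁻¹ * ∑ i, dirichletKernel n (ξ - x i) := by
  have hfourier (j : ℤ) (y : UnitAddCircle) :
      fourier (-j) y * fourier j ξ = (fourier j (ξ - y) : ℂ) := by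
    simp_rw [fourier_apply, ← Circle.coe_mul, ← toCircle_add]
    congr 2
    module
  simp_rw [fourierStieltjesPartialSum, fourierStieltjesCoeff_toSignedMeasure,
    integral_empiricalMeasure, dirichletKernel, Complex.real_smul, Complex.ofReal_inv,
    Complex.ofReal_natCast, mul_assoc, Finset.sum_mul, hfourier]
  rw [← Finset.mul_sum, Finset.sum_comm]

theorem fourierStieltjesPartialSum_empiricalMeasure_sub (m k : ℕ) (ξ : UnitAddCircle) :
    fourierStieltjesPartialSum (empiricalMeasure x).toSignedMeasure (m + k) ξ -
        fourierStieltjesPartialSum (empiricalMeasure x).toSignedMeasure m ξ =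
      (2 / Fintype.card ι *
        ∑ i, (fourier m (ξ - x i) * analyticDirichletKernel k (ξ - x i)).re : ℝ) := by
  simp_rw [fourierStieltjesPartialSum_empiricalMeasure, ← mul_sub, ← Finset.sum_sub_distrib,
    dirichletKernel_add_sub]
  push_cast
  rw [← Finset.mul_sum]
  ring

variable {x}

theorem exists_lt_norm_fourierStieltjesPartialSum_sub {ξ : UnitAddCircle}
    (hξ : LinearIndependent ℤ fun i ↦ ξ - x i) {k : ℕ} {B : ℝ}
    (hB : B < 2 / Fintype.card ι * ∑ i, ‖analyticDirichletKernel k (ξ - x i)‖) :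
    ∃ m, B < ‖fourierStieltjesPartialSum (empiricalMeasure x).toSignedMeasure (m + k) ξ -
      fourierStieltjesPartialSum (empiricalMeasure x).toSignedMeasure m ξ‖ := by
  have hcard : (0 : ℝ) < 2 / Fintype.card ι := by positivity
  obtain ⟨m, hm⟩ := exists_lt_sum_re_fourier_mul hξ _ ((div_lt_iff₀' hcard).2 hB)
  refine ⟨m, ?_⟩
  rw [fourierStieltjesPartialSum_empiricalMeasure_sub, Complex.norm_real]
  exact ((div_lt_iff₀' hcard).1 hm).trans_le (Real.le_norm_self _)

end EmpiricalMeasure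

/-- **Lemma 2.4 of the paper.**  There is an absolute constant `C > 0` such that for every
integer `k ≥ 2` there exists a finite Borel measure `ν` on `𝕋` of total variation `1` with
`sup { |S_n ν(x) - S_m ν(x)| : |n - m| = k } ≥ C log k` for almost every `x`. -/
theorem exists_measure_large_oscillation :
    ∃ C : ℝ, 0 < C ∧ ∀ k : ℕ, 2 ≤ k →
      ∃ ν : SignedMeasure (AddCircle (1:ℝ)),
        ν.totalVariation Set.univ = 1 ∧
        ∀ᵐ x ∂(haarAddCircle : Measure (AddCircle (1:ℝ))),
          ENNReal.ofReal (C * Real.log k) ≤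
            ⨆ (n : ℕ) (m : ℕ) (_ : ((n:ℤ) - (m:ℤ)).natAbs = k),
              ENNReal.ofReal ‖fourierStieltjesPartialSum ν n x -
                fourierStieltjesPartialSum ν m x‖ := by
  refine ⟨1 / (4 * π), by positivity, fun k hk ↦ ?_⟩
  have : NeZero k := ⟨by omega⟩
  obtain ⟨x, hx, hnet⟩ := exists_linearIndependent_net (4 * k)
  refine ⟨(empiricalMeasure x).toSignedMeasure, ?_, ?_⟩
  · rw [totalVariation_toSignedMeasure, measure_univ]
  filter_upwards [ae_linearIndependent_sub hx] with ξ hξ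
  obtain ⟨m, hm⟩ := exists_lt_norm_fourierStieltjesPartialSum_sub hξ
    (mul_log_lt_mul_sum_norm_analyticDirichletKernel hnet ξ)
  exact le_iSup_of_le (m + k) <| le_iSup_of_le m <| le_iSup_of_le (by simp) <|
    ENNReal.ofReal_le_ofReal hm.le
end

section
/- Let T be an invertible measure-preserving transformation of a standard (Lebesgue) probability space (X, 𝒜, μ) which is aperiodic, i.e. μ{x : T^n x = x} = 0 for every n ≥ 1. Then for every ε > 0 and every integer n ≥ 1 there exists F ∈ 𝒜 such that the sets F, T⁻¹(F), …, T^{−(n−1)}(F) are pairwise disjoint and μ(F ∪ T⁻¹(F) ∪ … ∪ T^{−(n−1)}(F)) > 1 − ε. -/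
open MeasureTheory
open scoped ENNReal

/-!
If almost every orbit visits a set `A`, let `F` consist of the points whose first hitting time of
`A` is a positive multiple of `n`. The hitting time drops by one at each step until it vanishes, so
the first `n` preimages of `F` are disjoint, and the only points they miss, up to a null set, are
those which visit `A` before time `n`; these have measure at most `n * μ A`. It remains to find such
an `A` of arbitrarily small measure, for which it is enough that `A` be itself disjoint from many of
its preimages.

Points can be separated by countably many measurable sets, so by aperiodicity countably many sets
`D k`, each disjoint from its first `N - 1` preimages, cover almost everything. Their union need not
have this property, but a union of the `D k ∩ E k` does if the `E k` are invariant and disjoint.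
Taking for `E k` the points which visit `D k` infinitely often, but not any `D l` with `l < k`,
Poincaré recurrence shows that almost every orbit meets `⋃ k, D k ∩ E k`.
-/

namespace KakutaniRokhlin

open Filter Function Set MeasurableSpace

variable {X : Type*} {f : X → X} {A D : Set X} {n : ℕ}

/-- `A` is the base of a (Rokhlin) tower of height `n`: its preimages under `f^[0], …, f^[n - 1]`
are pairwise disjoint. Preimages are used because `f` need not be invertible. -/
def IsTowerBase (f : X → X) (n : ℕ) (A : Set X) : Prop :=
  (Iio n).PairwiseDisjoint fun i ↦ f^[i] ⁻¹' A

theorem isTowerBase_iff_forall_iterate_notMem :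
    IsTowerBase f n A ↔ ∀ x ∈ A, ∀ i, 0 < i → i < n → f^[i] x ∉ A := by
  constructor
  · intro h x hx i hi hin
    exact disjoint_left.1 (h (hi.trans hin) hin hi.ne) hx
  · intro h i hi j hj hij
    wlog hlt : i < j generalizing i j
    · exact (this hj hi hij.symm (hij.lt_or_gt.resolve_left hlt)).symm
    refine disjoint_left.2 fun x hxi hxj ↦
      h _ hxi (j - i) (Nat.sub_pos_of_lt hlt) ((j.sub_le i).trans_lt hj) ?_
    rwa [← iterate_add_apply, Nat.sub_add_cancel hlt.le]

theorem isTowerBase_diff_biUnion_preimage (f : X → X) (n : ℕ) (V : Set X) :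
    IsTowerBase f n (V \ ⋃ i ∈ Ioo 0 n, f^[i] ⁻¹' V) :=
  isTowerBase_iff_forall_iterate_notMem.2 fun _ hx _ hi hin hxi ↦
    hx.2 (mem_biUnion ⟨hi, hin⟩ hxi.1)

theorem IsTowerBase.iUnion_inter {ι : Type*} {D E : ι → Set X} (hD : ∀ k, IsTowerBase f n (D k))
    (hE : ∀ k, f ⁻¹' E k = E k) (hdisj : Pairwise (Disjoint on E)) :
    IsTowerBase f n (⋃ k, D k ∩ E k) := by
  simp only [isTowerBase_iff_forall_iterate_notMem] at hD ⊢
  intro x hx i hi hin hxi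
  obtain ⟨k, hxD, hxE⟩ := mem_iUnion.1 hx
  obtain ⟨l, hxiD, hxiE⟩ := mem_iUnion.1 hxi
  have hxE' : x ∈ E l := by
    rwa [← mem_preimage, preimage_iterate_eq, iterate_fixed (hE l)] at hxiE
  obtain rfl : k = l := hdisj.eq (not_disjoint_iff.2 ⟨x, hxE, hxE'⟩)
  exact hD k x hxD i hi hin hxiD

theorem IsTowerBase.mul_measure_le [MeasurableSpace X] {μ : Measure X} (h : IsTowerBase f n A)
    (hf : MeasurePreserving f μ μ) (hA : NullMeasurableSet A μ) : n * μ A ≤ μ univ := by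
  have hmeas (i : ℕ) : NullMeasurableSet (f^[i] ⁻¹' A) μ :=
    hA.preimage (hf.iterate i).quasiMeasurePreserving
  calc
    n * μ A = ∑ i ∈ Finset.range n, μ (f^[i] ⁻¹' A) := by
      simp [(hf.iterate _).measure_preimage hA]
    _ ≤ μ univ := sum_measure_le_measure_univ (fun i _ ↦ hmeas i) fun i hi j hj hij ↦
      (h (Finset.mem_range.1 hi) (Finset.mem_range.1 hj) hij).aedisjoint

/-- The set of points whose first hitting time of `A` under `f` is `k`. -/
def hittingSet (f : X → X) (A : Set X) (k : ℕ) : Set X :=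
  disjointed (fun j ↦ f^[j] ⁻¹' A) k

theorem mem_hittingSet {k : ℕ} {x : X} :
    x ∈ hittingSet f A k ↔ f^[k] x ∈ A ∧ ∀ j < k, f^[j] x ∉ A := by
  simp [hittingSet, disjointed_eq_inter_compl]

theorem iterate_mem_hittingSet {i k : ℕ} {x : X} (hx : x ∈ hittingSet f A (k + i)) :
    f^[i] x ∈ hittingSet f A k := by
  rw [mem_hittingSet] at hx ⊢
  simp only [← iterate_add_apply]
  exact ⟨hx.1, fun j hj ↦ hx.2 _ (by lia)⟩

/-- The base of the tower of height `n` built from the first hitting times of `A`: the points where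
this time is a positive multiple of `n`. -/
def hittingTowerBase (f : X → X) (A : Set X) (n : ℕ) : Set X :=
  ⋃ m : ℕ, hittingSet f A (n * (m + 1))

theorem measurableSet_hittingTowerBase [MeasurableSpace X] (hf : Measurable f)
    (hA : MeasurableSet A) (n : ℕ) : MeasurableSet (hittingTowerBase f A n) :=
  .iUnion fun _ ↦ .disjointed (fun j ↦ hf.iterate j hA) _

theorem isTowerBase_hittingTowerBase (f : X → X) (A : Set X) (n : ℕ) :
    IsTowerBase f n (hittingTowerBase f A n) := by
  refine isTowerBase_iff_forall_iterate_notMem.2 fun x hx i hi hin hxi ↦ ?_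
  obtain ⟨m, hm⟩ := mem_iUnion.1 hx
  obtain ⟨p, hp⟩ := mem_iUnion.1 hxi
  have hle : i ≤ n * (m + 1) := hin.le.trans (Nat.le_mul_of_pos_right n m.succ_pos)
  have hmi : f^[i] x ∈ hittingSet f A (n * (m + 1) - i) :=
    iterate_mem_hittingSet (by rwa [Nat.sub_add_cancel hle])
  have heq : n * (m + 1) - i = n * (p + 1) :=
    (disjoint_disjointed _).eq (not_disjoint_iff.2 ⟨_, hmi, hp⟩)
  have hdvd : n ∣ i := (Nat.dvd_sub_iff_right hle (dvd_mul_right ..)).1 (heq ▸ dvd_mul_right ..)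
  exact Nat.not_dvd_of_pos_of_lt hi hin hdvd

theorem exists_iterate_mem_hittingTowerBase {x : X} (hn : 0 < n) (hx : ∃ k, f^[k] x ∈ A)
    (hlate : ∀ k < n, f^[k] x ∉ A) : ∃ i < n, f^[i] x ∈ hittingTowerBase f A n := by
  obtain ⟨k, hk⟩ : ∃ k, x ∈ hittingSet f A k := by
    rw [← mem_iUnion]
    simpa only [hittingSet, iUnion_disjointed, mem_iUnion, mem_preimage] using hx
  have hnk : n ≤ k := not_lt.1 fun hkn ↦ hlate k hkn (mem_hittingSet.1 hk).1
  refine ⟨k % n, k.mod_lt hn, mem_iUnion.2 ⟨k / n - 1, iterate_mem_hittingSet ?_⟩⟩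
  rwa [Nat.sub_add_cancel (Nat.div_pos hnk hn), Nat.div_add_mod]

theorem measure_compl_iUnion_preimage_hittingTowerBase_le [MeasurableSpace X] {μ : Measure X}
    (hf : MeasurePreserving f μ μ) (hA : NullMeasurableSet A μ) (hsweep : ∀ᵐ x ∂μ, ∃ k, f^[k] x ∈ A)
    (hn : 0 < n) :
    μ (⋃ i ∈ Finset.range n, f^[i] ⁻¹' hittingTowerBase f A n)ᶜ ≤ n * μ A := by
  calc
    _ ≤ μ (⋃ i ∈ Finset.range n, f^[i] ⁻¹' A) := by
      refine measure_mono_ae ?_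
      filter_upwards [hsweep] with x hx hmissed
      by_contra (hlate : x ∉ ⋃ i ∈ Finset.range n, f^[i] ⁻¹' A)
      refine hmissed ?_
      simp only [mem_iUnion, Finset.mem_range, mem_preimage, exists_prop, not_exists, not_and]
        at hlate ⊢
      exact exists_iterate_mem_hittingTowerBase hn hx hlate
    _ ≤ ∑ i ∈ Finset.range n, μ (f^[i] ⁻¹' A) := measure_biUnion_finset_le _ _
    _ = n * μ A := by simp [(hf.iterate _).measure_preimage hA]

/-- The set of points which visit `D` infinitely often under `f`. -/
def recurrentSet (f : X → X) (D : Set X) : Set X :=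
  limsup (fun i ↦ f^[i] ⁻¹' D) atTop

theorem mem_recurrentSet {x : X} : x ∈ recurrentSet f D ↔ ∃ᶠ i in atTop, f^[i] x ∈ D :=
  mem_limsup_iff_frequently_mem

variable [MeasurableSpace X] {μ : Measure X}

theorem measurableSet_invariants_recurrentSet (hf : Measurable f) (hD : MeasurableSet D) :
    MeasurableSet[invariants f] (recurrentSet f D) := by
  refine measurableSet_invariants.2 ⟨.measurableSet_limsup fun i ↦ hf.iterate i hD, ?_⟩
  ext x
  simp only [mem_preimage, mem_recurrentSet, ← iterate_succ_apply]
  conv_rhs => rw [← map_add_atTop_eq_nat 1, frequently_map]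

theorem exists_isTowerBase_cover [CountablySeparated X] (hf : Measurable f) (n : ℕ) :
    ∃ D : ℕ → Set X, (∀ k, MeasurableSet (D k)) ∧ (∀ k, IsTowerBase f n (D k)) ∧
      (periodicPts f)ᶜ ⊆ ⋃ k, D k := by
  obtain ⟨g, hg, hginj⟩ := measurable_injection_nat_bool_of_countablySeparated X
  obtain ⟨U, hU⟩ := TopologicalSpace.exists_seq_basis (ℕ → Bool)
  have hV (k : ℕ) : MeasurableSet (g ⁻¹' U k) := hg (hU.isOpen (mem_range_self k)).measurableSet
  refine ⟨fun k ↦ g ⁻¹' U k \ ⋃ i ∈ Ioo 0 n, f^[i] ⁻¹' (g ⁻¹' U k), fun k ↦ ?_,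
    fun k ↦ isTowerBase_diff_biUnion_preimage f n _, fun x hx ↦ ?_⟩
  · exact (hV k).diff (.biUnion (to_countable _) fun i _ ↦ hf.iterate i (hV k))
  have hfin : ((fun i ↦ g (f^[i] x)) '' Ioo 0 n).Finite := (finite_Ioo 0 n).image _
  have hgx : g x ∉ (fun i ↦ g (f^[i] x)) '' Ioo 0 n := by
    rintro ⟨i, hi, hix⟩
    exact hx (mk_mem_periodicPts hi.1 (hginj hix))
  obtain ⟨_, ⟨k, rfl⟩, hxk, hk⟩ := hU.exists_subset_of_mem_open hgx hfin.isClosed.isOpen_compl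
  refine mem_iUnion.2 ⟨k, hxk, fun hmem ↦ ?_⟩
  obtain ⟨i, hi, hik⟩ := mem_iUnion₂.1 hmem
  exact hk hik (mem_image_of_mem _ hi)

theorem exists_isTowerBase_sweeping [CountablySeparated X] (hf : Conservative f μ)
    (haper : μ (periodicPts f) = 0) (n : ℕ) :
    ∃ A, MeasurableSet A ∧ IsTowerBase f n A ∧ ∀ᵐ x ∂μ, ∃ k, f^[k] x ∈ A := by
  obtain ⟨D, hDmeas, hDtower, hDcover⟩ := exists_isTowerBase_cover hf.measurable n
  let E : ℕ → Set X := disjointed fun k ↦ recurrentSet f (D k)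
  have hE (k : ℕ) : MeasurableSet (E k) ∧ f ⁻¹' E k = E k :=
    measurableSet_invariants.1 <| MeasurableSet.disjointed
      (fun l ↦ measurableSet_invariants_recurrentSet hf.measurable (hDmeas l)) k
  refine ⟨⋃ k, D k ∩ E k, .iUnion fun k ↦ (hDmeas k).inter (hE k).1,
    .iUnion_inter hDtower (fun k ↦ (hE k).2) (disjoint_disjointed _), ?_⟩
  have hrec : ∀ᵐ x ∂μ, ∀ k, x ∈ D k → x ∈ recurrentSet f (D k) := ae_all_iff.2 fun k ↦
    (hf.ae_mem_imp_frequently_image_mem (hDmeas k).nullMeasurableSet).mono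
      fun x hx hxD ↦ mem_recurrentSet.2 (hx hxD)
  filter_upwards [hrec, measure_eq_zero_iff_ae_notMem.1 haper] with x hx hxper
  obtain ⟨l, hl⟩ := mem_iUnion.1 (hDcover hxper)
  obtain ⟨k, hk⟩ : ∃ k, x ∈ E k := by
    rw [← mem_iUnion, iUnion_disjointed]
    exact mem_iUnion_of_mem l (hx l hl)
  obtain ⟨j, hj⟩ := (mem_recurrentSet.1 (disjointed_subset _ k hk)).exists
  refine ⟨j, mem_iUnion.2 ⟨k, hj, ?_⟩⟩
  rwa [← mem_preimage, preimage_iterate_eq, iterate_fixed (hE k).2]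

theorem exists_sweeping_measure_lt [CountablySeparated X] [IsFiniteMeasure μ]
    (hf : MeasurePreserving f μ μ) (haper : μ (periodicPts f) = 0) {δ : ℝ≥0∞} (hδ : δ ≠ 0) :
    ∃ A, MeasurableSet A ∧ μ A < δ ∧ ∀ᵐ x ∂μ, ∃ k, f^[k] x ∈ A := by
  obtain ⟨N, hN⟩ := ENNReal.exists_nat_mul_gt hδ (measure_ne_top μ univ)
  obtain ⟨A, hA, htower, hsweep⟩ := exists_isTowerBase_sweeping hf.conservative haper N
  have hlt : N * μ A < N * δ := (htower.mul_measure_le hf hA.nullMeasurableSet).trans_lt hN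
  exact ⟨A, hA, lt_of_mul_lt_mul_left' hlt, hsweep⟩

theorem measure_periodicPts_eq_zero_iff :
    μ (periodicPts f) = 0 ↔ ∀ n : ℕ, 1 ≤ n → μ {x | f^[n] x = x} = 0 := by
  simp only [← bUnion_ptsOfPeriod, measure_iUnion_null_iff]
  rfl

theorem measure_univ_sub_lt_of_compl_lt_min [IsFiniteMeasure μ] {ε : ℝ≥0∞}
    (h : μ Aᶜ < min (μ univ) ε) : μ univ - ε < μ A := by
  rw [← tsub_min]
  refine ENNReal.sub_lt_of_lt_add (min_le_left _ _) ?_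
  calc
    μ univ ≤ μ A + μ Aᶜ := by
      rw [← union_compl_self A]
      exact measure_union_le _ _
    _ < μ A + min (μ univ) ε := ENNReal.add_lt_add_left (measure_ne_top μ A) h

end KakutaniRokhlin

open KakutaniRokhlin in
theorem kakutani_rokhlin_general {X : Type*} [MeasurableSpace X]
    [MeasurableSpace.CountablySeparated X] {μ : Measure X} [IsFiniteMeasure μ] {f : X → X}
    (hf : MeasurePreserving f μ μ) (haper : μ (Function.periodicPts f) = 0)
    {ε : ℝ≥0∞} (hε : ε ≠ 0) {n : ℕ} (hn : 0 < n) :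
    ∃ F : Set X, MeasurableSet F ∧ IsTowerBase f n F ∧
      μ (⋃ i ∈ Finset.range n, f^[i] ⁻¹' F)ᶜ < ε := by
  have hδ : ε / n ≠ 0 := ENNReal.div_ne_zero.2 ⟨hε, ENNReal.natCast_ne_top n⟩
  obtain ⟨A, hA, hAδ, hsweep⟩ := exists_sweeping_measure_lt hf haper hδ
  refine ⟨hittingTowerBase f A n, measurableSet_hittingTowerBase hf.measurable hA n,
    isTowerBase_hittingTowerBase f A n, ?_⟩
  calc
    _ ≤ n * μ A :=
      measure_compl_iUnion_preimage_hittingTowerBase_le hf hA.nullMeasurableSet hsweep hn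
    _ < ε := ENNReal.mul_lt_of_lt_div' hAδ

open KakutaniRokhlin in
/-- **The Kakutani–Rokhlin lemma** (Lemma 6.1 of the paper).
If `T` is an aperiodic invertible measure-preserving transformation of a standard probability
space, then for every `ε > 0` and every `n ≥ 1` there exists a measurable set `F` such that
`F, T⁻¹(F), …, T^{-(n-1)}(F)` are pairwise disjoint and their union has measure `> 1 - ε`. -/
theorem kakutani_rokhlin
    {X : Type*} [MeasurableSpace X] [StandardBorelSpace X]
    (μ : Measure X) [IsProbabilityMeasure μ]
    (T : X ≃ᵐ X) (hT : MeasurePreserving T μ μ)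
    (hT_aperiodic : ∀ n : ℕ, 1 ≤ n → μ {x | (T : X → X)^[n] x = x} = 0) :
    ∀ ε : ℝ, 0 < ε → ∀ n : ℕ, 1 ≤ n →
      ∃ F : Set X, MeasurableSet F ∧
        (∀ i j : ℕ, i < n → j < n → i ≠ j →
          Disjoint ((T : X → X)^[i] ⁻¹' F) ((T : X → X)^[j] ⁻¹' F)) ∧
        1 - ENNReal.ofReal ε < μ (⋃ i ∈ Finset.range n, (T : X → X)^[i] ⁻¹' F) := by
  intro ε hε n hn
  obtain ⟨F, hF, htower, hcompl⟩ := kakutani_rokhlin_general hT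
    (measure_periodicPts_eq_zero_iff.2 hT_aperiodic) (ε := min (μ .univ) (.ofReal ε)) (by simpa) hn
  exact ⟨F, hF, fun i j hi hj ↦ htower hi hj,
    by simpa using measure_univ_sub_lt_of_compl_lt_min hcompl⟩
end

section
/- Let {w_k : k ≥ 1} be nonnegative reals and set A_n f(x) = Σ_{h=1}^n w_h f(τ^h x). Let φ : ℕ → ℕ satisfy φ(n) → ∞ as n → ∞. Assume there exists an infinite set 𝒩 of positive integers such that: (a) Δ_n := min_{1 ≤ h ≤ n − φ(n)} Σ_{k=h}^{h+φ(n)} w_k → ∞ as n → ∞ along 𝒩; and (b) Σ_{n ∈ 𝒩} φ(n)/n < ∞. Then for every η > 0 there exists B ∈ 𝒜 with 0 < μ(B) ≤ η such that limsup_{𝒩 ∋ n → ∞} A_n(χ_B)(x) = ∞ for μ-almost every x ∈ X. -/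
/-!
For `n ∈ 𝒩` put `N = ⌈n / 4⌉`. If no point of `F` returns to `F` before time `N`, then `μ F` is at
most `μ univ / N`, and a greedy choice of such an `F` makes all orbits outside a set of arbitrarily
small measure meet `F` at a time less than `2 * N`. Hence `C n = ⋃ i ≤ φ n, τ⁻ⁱ F` has measure
`O(φ n / n)`, and these orbits spend a whole window `h, …, h + φ n` with `1 ≤ h ≤ n - φ n` in `C n`,
so that `A_n χ_{C n} ≥ Δ_n` there.

By condition (b) the union `B` of `C n` over all but finitely many `n ∈ 𝒩` has measure at most `η`,
and if the exceptional measures are summable, the Borel-Cantelli lemma gives `A_n χ_B ≥ Δ_n` for all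
large `n ∈ 𝒩`, almost everywhere. The sums attached to a null set vanish almost everywhere, so
`μ B > 0`.
-/

open MeasureTheory Filter
open scoped ENNReal

open Function Set Topology

section Separation

/-- `S` is `N`-separated along the orbits of `τ`: a point of `S` does not return to `S` at any
time strictly between `0` and `N`. -/
def IsOrbitSeparated {X : Type*} (τ : X → X) (N : ℕ) (S : Set X) : Prop :=
  ∀ x ∈ S, ∀ m ∈ Ioo 0 N, τ^[m] x ∉ S

variable {X : Type*} [MeasurableSpace X] {τ : X → X} {N : ℕ}

lemma measure_periodicPts_eq_zero_iff {μ : Measure X} :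
    μ (periodicPts τ) = 0 ↔ ∀ n : ℕ, 1 ≤ n → μ {x | τ^[n] x = x} = 0 := by
  rw [← bUnion_ptsOfPeriod]
  exact measure_biUnion_null_iff (to_countable {n : ℕ | 1 ≤ n})

lemma IsOrbitSeparated.mul_measure_le {μ : Measure X} (hτ : MeasurePreserving τ μ μ) {S : Set X}
    (hS : IsOrbitSeparated τ N S) (hSm : NullMeasurableSet S μ) : N * μ S ≤ μ univ := by
  by_contra! hlt
  obtain ⟨x, hx, m, hm, hmx⟩ := hτ.exists_mem_iterate_mem_of_measure_univ_lt_mul_measure hSm hlt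
  exact hS x hx m hm hmx

lemma exists_seq_measurableSet_separating_finite (X : Type*) [MeasurableSpace X]
    [MeasurableSpace.CountablySeparated X] :
    ∃ V : ℕ → Set X, (∀ j, MeasurableSet (V j)) ∧
      ∀ t : Set X, t.Finite → ∀ x ∉ t, ∃ j, x ∈ V j ∧ Disjoint (V j) t := by
  obtain ⟨_, _, _, _⟩ := exists_opensMeasurableSpace_of_countablySeparated X
  obtain ⟨b, hb_count, -, hb⟩ := TopologicalSpace.exists_countable_basis X
  obtain ⟨V, hV⟩ := (hb_count.insert ∅).exists_eq_range (insert_nonempty _ _)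
  refine ⟨V, fun j => ?_, fun t ht x hx => ?_⟩
  · rcases (hV ▸ mem_range_self j : V j ∈ insert ∅ b) with hj | hj
    · exact hj ▸ MeasurableSet.empty
    · exact (hb.isOpen hj).measurableSet
  · obtain ⟨C, hCb, hxC, hCt⟩ := hb.exists_subset_of_mem_open hx ht.isClosed.isOpen_compl
    obtain ⟨j, rfl⟩ := (hV ▸ mem_insert_of_mem _ hCb : C ∈ range V)
    exact ⟨j, hxC, disjoint_left.2 fun y hy => hCt hy⟩

lemma exists_isOrbitSeparated_cover [MeasurableSpace.CountablySeparated X] (hτ : Measurable τ)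
    (N : ℕ) :
    ∃ U : ℕ → Set X, (∀ j, MeasurableSet (U j)) ∧ (∀ j, IsOrbitSeparated τ N (U j)) ∧
      (periodicPts τ)ᶜ ⊆ ⋃ j, U j := by
  obtain ⟨V, hVm, hV⟩ := exists_seq_measurableSet_separating_finite X
  refine ⟨fun j => V j \ ⋃ m ∈ Ioo 0 N, τ^[m] ⁻¹' V j, fun j => ?_, fun j x hx m hm hmx => ?_,
    fun x hx => ?_⟩
  · exact (hVm j).diff (.biUnion (to_countable _) fun m _ => hτ.iterate m (hVm j))
  · exact hx.2 (mem_biUnion hm hmx.1)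
  · have hx_notMem : x ∉ (τ^[·] x) '' Ioo 0 N := by
      rintro ⟨m, hm, hmx⟩
      exact hx (mk_mem_periodicPts hm.1 hmx)
    obtain ⟨j, hxj, hj⟩ := hV _ ((finite_Ioo 0 N).image _) x hx_notMem
    refine mem_iUnion.2 ⟨j, hxj, fun hmem => ?_⟩
    obtain ⟨m, hm, hmx⟩ := mem_iUnion₂.1 hmem
    exact disjoint_left.1 hj hmx (mem_image_of_mem _ hm)

end Separation

section Marker

/-- The greedy choice of an `N`-separated set of times along every orbit: round `j` adds each time
`t` with `τ^t x ∈ U j` that is at distance at least `N` from the times added before. Here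
`x ∈ greedyMarker τ N U j` says that the time `j * N` is among those added to the orbit of `x` in
the first `j` rounds; since each round looks back by less than `N`, the shift by `j * N` keeps all
times involved nonnegative, so that `τ` need not be invertible. -/
def greedyMarker {X : Type*} (τ : X → X) (N : ℕ) (U : ℕ → Set X) : ℕ → Set X
  | 0 => ∅
  | j + 1 => τ^[N] ⁻¹' greedyMarker τ N U j ∪
      (τ^[(j + 1) * N] ⁻¹' U j \ ⋃ m ∈ Ioo 0 (2 * N), τ^[m] ⁻¹' greedyMarker τ N U j)

variable {X : Type*} {τ : X → X} {N : ℕ} {U : ℕ → Set X}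

lemma measurableSet_greedyMarker [MeasurableSpace X] (hτ : Measurable τ)
    (hU : ∀ j, MeasurableSet (U j)) (j : ℕ) : MeasurableSet (greedyMarker τ N U j) := by
  induction j with
  | zero => exact .empty
  | succ j ih =>
    exact (hτ.iterate N ih).union <| (hτ.iterate _ (hU j)).diff <|
      .biUnion (to_countable _) fun m _ => hτ.iterate m ih

lemma isOrbitSeparated_greedyMarker (hU : ∀ j, IsOrbitSeparated τ N (U j)) (j : ℕ) :
    IsOrbitSeparated τ N (greedyMarker τ N U j) := by
  induction j with
  | zero => exact fun x hx => hx.elim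
  | succ j ih =>
    rintro x hx m ⟨hm0, hmN⟩ hmx
    rcases hx with hx_old | ⟨hxU, hx_new⟩ <;> rcases hmx with hmx_old | ⟨hmxU, hmx_new⟩
    · refine ih _ hx_old m ⟨hm0, hmN⟩ ?_
      rwa [(Commute.iterate_iterate_self τ m N).eq]
    · refine hmx_new (mem_biUnion (x := N - m) ⟨by omega, by omega⟩ ?_)
      rwa [mem_preimage, ← iterate_add_apply, Nat.sub_add_cancel hmN.le]
    · refine hx_new (mem_biUnion (x := N + m) ⟨by omega, by omega⟩ ?_)
      rwa [mem_preimage, iterate_add_apply]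
    · refine hU j _ hxU m ⟨hm0, hmN⟩ ?_
      rwa [(Commute.iterate_iterate_self τ m _).eq]

lemma mem_greedyMarker_add_of_iterate_mem {j k : ℕ} {x : X}
    (hx : τ^[k * N] x ∈ greedyMarker τ N U j) : x ∈ greedyMarker τ N U (j + k) := by
  induction k generalizing x with
  | zero => simpa using hx
  | succ k ih =>
    rw [Nat.succ_mul, iterate_add_apply] at hx
    exact Or.inl (ih hx)

lemma exists_iterate_mem_greedyMarker (hN : 0 < N) {j J : ℕ} (hj : j < J) {x : X}
    (hx : τ^[(J + 1) * N] x ∈ U j) : ∃ m ∈ Ioo 0 (2 * N), τ^[m] x ∈ greedyMarker τ N U J := by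
  obtain ⟨k, rfl⟩ := Nat.exists_eq_add_of_lt hj
  set y := τ^[(k + 1) * N] x with hy
  by_cases hold : y ∈ ⋃ m ∈ Ioo 0 (2 * N), τ^[m] ⁻¹' greedyMarker τ N U j
  · obtain ⟨m, hm, hmy⟩ := mem_iUnion₂.1 hold
    refine ⟨m, hm, mem_greedyMarker_add_of_iterate_mem (k := k + 1) ?_⟩
    rwa [(Commute.iterate_iterate_self τ _ m).eq]
  · have hyU : τ^[(j + 1) * N] y ∈ U j := by
      rwa [hy, ← iterate_add_apply, ← add_mul, show j + 1 + (k + 1) = j + k + 1 + 1 by omega]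
    have hy_new : y ∈ greedyMarker τ N U (j + 1) := Or.inr ⟨hyU, hold⟩
    rw [hy, add_one_mul, iterate_add_apply] at hy_new
    refine ⟨N, ⟨hN, by omega⟩, ?_⟩
    rw [add_right_comm]
    exact mem_greedyMarker_add_of_iterate_mem hy_new

/-- A weak form of Rokhlin's lemma. -/
lemma exists_isOrbitSeparated_measure_forall_iterate_notMem_le [MeasurableSpace X]
    [MeasurableSpace.CountablySeparated X] {μ : Measure X} [IsFiniteMeasure μ]
    (hτ : MeasurePreserving τ μ μ) (hap : μ (periodicPts τ) = 0) (hN : 0 < N) {ε : ℝ≥0∞}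
    (hε : ε ≠ 0) :
    ∃ F : Set X, MeasurableSet F ∧ IsOrbitSeparated τ N F ∧
      μ {x | ∀ m ∈ Ioo 0 (2 * N), τ^[m] x ∉ F} ≤ ε := by
  obtain ⟨U, hUm, hU_sep, hU_cover⟩ := exists_isOrbitSeparated_cover hτ.measurable N
  let R : ℕ → Set X := fun J => (⋃ j < J, U j)ᶜ
  have hR_anti : Antitone R := fun J K hJK =>
    compl_subset_compl.2 (biUnion_subset_biUnion_left fun j hj => lt_of_lt_of_le hj hJK)
  have hRm : ∀ J, MeasurableSet (R J) := fun J =>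
    (MeasurableSet.biUnion (to_countable _) fun j _ => hUm j).compl
  have hR_null : μ (⋂ J, R J) = 0 := by
    refine measure_mono_null (fun x hx => ?_) hap
    by_contra hx_per
    obtain ⟨j, hj⟩ := mem_iUnion.1 (hU_cover hx_per)
    exact mem_iInter.1 hx (j + 1) (mem_biUnion (Nat.lt_succ_self j) hj)
  have hR_tendsto : Tendsto (μ ∘ R) atTop (𝓝 0) :=
    hR_null ▸ tendsto_measure_iInter_atTop (fun J => (hRm J).nullMeasurableSet) hR_anti
      ⟨0, measure_ne_top μ _⟩
  obtain ⟨J, hJ⟩ := (hR_tendsto.eventually_le_const hε.bot_lt).exists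
  refine ⟨greedyMarker τ N U J, measurableSet_greedyMarker hτ.measurable hUm J,
    isOrbitSeparated_greedyMarker hU_sep J, ?_⟩
  calc μ {x | ∀ m ∈ Ioo 0 (2 * N), τ^[m] x ∉ greedyMarker τ N U J}
      ≤ μ (τ^[(J + 1) * N] ⁻¹' R J) := by
        refine measure_mono fun x hx hmem => ?_
        obtain ⟨j, hj, hxj⟩ := mem_iUnion₂.1 hmem
        obtain ⟨m, hm, hmx⟩ := exists_iterate_mem_greedyMarker hN hj hxj
        exact hx m hm hmx
    _ ≤ μ (R J) := (hτ.iterate _).measure_preimage_le _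
    _ ≤ ε := hJ

end Marker

section VisitRun

variable {X : Type*}

/-- Between the times `1` and `n`, the orbit of `x` under `τ` spends `p + 1` consecutive times in
`C`. -/
def HasVisitRun (τ : X → X) (C : Set X) (n p : ℕ) (x : X) : Prop :=
  ∃ h, 1 ≤ h ∧ h + p ≤ n ∧ ∀ k ∈ Finset.Icc h (h + p), τ^[k] x ∈ C

variable {τ : X → X}

lemma HasVisitRun.mono {C D : Set X} {n p : ℕ} {x : X} (hCD : C ⊆ D) :
    HasVisitRun τ C n p x → HasVisitRun τ D n p x :=
  fun ⟨h, h_pos, h_le, hC⟩ => ⟨h, h_pos, h_le, fun k hk => hCD (hC k hk)⟩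

lemma hasVisitRun_biUnion_preimage {F : Set X} {N n p : ℕ} (hn : 2 * N + p ≤ n + 1) {x : X}
    (hx : ∃ m ∈ Ioo 0 (2 * N), τ^[m] (τ^[p] x) ∈ F) :
    HasVisitRun τ (⋃ i ∈ Finset.range (p + 1), τ^[i] ⁻¹' F) n p x := by
  obtain ⟨m, ⟨hm0, hmN⟩, hm⟩ := hx
  refine ⟨m, hm0, by omega, fun k hk => ?_⟩
  obtain ⟨hmk, hkm⟩ := Finset.mem_Icc.1 hk
  refine mem_iUnion₂.2 ⟨m + p - k, Finset.mem_range.2 (by omega), ?_⟩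
  rwa [mem_preimage, ← iterate_add_apply, Nat.sub_add_cancel hkm, iterate_add_apply]

variable [MeasurableSpace X] {μ : Measure X}

lemma measure_biUnion_range_preimage_iterate_le (hτ : MeasurePreserving τ μ μ) {F : Set X}
    (hF : NullMeasurableSet F μ) (k : ℕ) :
    μ (⋃ i ∈ Finset.range k, τ^[i] ⁻¹' F) ≤ k * μ F :=
  calc μ (⋃ i ∈ Finset.range k, τ^[i] ⁻¹' F)
      ≤ ∑ i ∈ Finset.range k, μ (τ^[i] ⁻¹' F) := measure_biUnion_finset_le _ _
    _ = k * μ F := by simp [(hτ.iterate _).measure_preimage hF]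

variable [MeasurableSpace.CountablySeparated X] [IsFiniteMeasure μ]

lemma exists_measure_not_hasVisitRun_le (hτ : MeasurePreserving τ μ μ)
    (hap : μ (periodicPts τ) = 0) {N n p : ℕ} (hN : 0 < N) (hn : 2 * N + p ≤ n + 1) {ε : ℝ≥0∞}
    (hε : ε ≠ 0) :
    ∃ C : Set X, MeasurableSet C ∧ N * μ C ≤ (p + 1) * μ univ ∧
      μ {x | ¬ HasVisitRun τ C n p x} ≤ ε := by
  obtain ⟨F, hFm, hF_sep, hF_visit⟩ :=
    exists_isOrbitSeparated_measure_forall_iterate_notMem_le hτ hap hN hε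
  refine ⟨⋃ i ∈ Finset.range (p + 1), τ^[i] ⁻¹' F,
    .biUnion (to_countable _) fun i _ => hτ.measurable.iterate i hFm, ?_, ?_⟩
  · calc N * μ (⋃ i ∈ Finset.range (p + 1), τ^[i] ⁻¹' F)
        ≤ N * ((p + 1 : ℕ) * μ F) := by
          gcongr
          exact measure_biUnion_range_preimage_iterate_le hτ hFm.nullMeasurableSet _
      _ = (p + 1) * (N * μ F) := by push_cast; ring
      _ ≤ (p + 1) * μ univ := by
          gcongr
          exact hF_sep.mul_measure_le hτ hFm.nullMeasurableSet
  · calc μ {x | ¬ HasVisitRun τ (⋃ i ∈ Finset.range (p + 1), τ^[i] ⁻¹' F) n p x}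
        ≤ μ (τ^[p] ⁻¹' {x | ∀ m ∈ Ioo 0 (2 * N), τ^[m] x ∉ F}) :=
          measure_mono fun x hx m hm hmx => hx (hasVisitRun_biUnion_preimage hn ⟨m, hm, hmx⟩)
      _ ≤ μ {x | ∀ m ∈ Ioo 0 (2 * N), τ^[m] x ∉ F} := (hτ.iterate p).measure_preimage_le _
      _ ≤ ε := hF_visit

lemma exists_measure_le_div_measure_not_hasVisitRun_le (hτ : MeasurePreserving τ μ μ)
    (hap : μ (periodicPts τ) = 0) {n p : ℕ} (hp : 0 < p) (hpn : 2 * p ≤ n) {ε : ℝ≥0∞}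
    (hε : ε ≠ 0) :
    ∃ C : Set X, MeasurableSet C ∧ μ C ≤ 8 * μ univ * ENNReal.ofReal (p / n) ∧
      μ {x | ¬ HasVisitRun τ C n p x} ≤ ε := by
  -- `N = ⌈n / 4⌉` is the value for which `2 * N - 1 + p ≤ n` whenever `2 * p ≤ n`.
  set N := (n + 3) / 4
  obtain ⟨C, hCm, hC, hC_run⟩ :=
    exists_measure_not_hasVisitRun_le hτ hap (N := N) (by omega)
      (show 2 * N + p ≤ n + 1 by omega) hε
  refine ⟨C, hCm, ?_, hC_run⟩
  have hn : 0 < n := by omega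
  have hnN : (n : ℝ≥0∞) ≤ 4 * N := by exact_mod_cast (by omega : n ≤ 4 * N)
  have hp1 : (p + 1 : ℝ≥0∞) ≤ 2 * p := by exact_mod_cast (by omega : p + 1 ≤ 2 * p)
  rw [ENNReal.ofReal_div_of_pos (by exact_mod_cast hn), ENNReal.ofReal_natCast,
    ENNReal.ofReal_natCast, ← mul_div_assoc,
    ENNReal.le_div_iff_mul_le (.inl (by exact_mod_cast hn.ne')) (.inl (ENNReal.natCast_ne_top n))]
  calc μ C * n ≤ μ C * (4 * N) := by gcongr
    _ = 4 * (N * μ C) := by ring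
    _ ≤ 4 * ((p + 1) * μ univ) := by gcongr
    _ ≤ 4 * (2 * p * μ univ) := by gcongr
    _ = 8 * μ univ * p := by ring

end VisitRun

section Selection

variable {X : Type*} [MeasurableSpace X] {μ : Measure X}

lemma exists_measure_le_ae_eventually_of_monotone {ι : Type*} [Countable ι]
    {P : ι → Set X → X → Prop} (hP_mono : ∀ i x, Monotone fun C => P i C x)
    {a : ι → ℝ≥0∞} (ha : ∑' i, a i ≠ ∞)
    (hP : ∀ᶠ i in cofinite, ∀ ε : ℝ≥0∞, ε ≠ 0 →
      ∃ C, MeasurableSet C ∧ μ C ≤ a i ∧ μ {x | ¬ P i C x} ≤ ε)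
    {η : ℝ≥0∞} (hη : η ≠ 0) :
    ∃ B, MeasurableSet B ∧ μ B ≤ η ∧ ∀ᵐ x ∂μ, ∀ᶠ i in cofinite, P i B x := by
  have hP_fin := eventually_cofinite.1 hP
  have h_tail : ∀ᶠ s : Finset ι in atTop, ∑' i : {i // i ∉ s}, a i ≤ η :=
    (ENNReal.tendsto_tsum_compl_atTop_zero ha).eventually_le_const hη.bot_lt
  obtain ⟨s, hs_bad, hs_tail⟩ := ((eventually_ge_atTop hP_fin.toFinset).and h_tail).exists
  obtain ⟨δ, hδ_pos, hδ_sum⟩ := ENNReal.exists_pos_sum_of_countable' one_ne_zero {i // i ∉ s}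
  have hP_good : ∀ i : {i // i ∉ s}, ∃ C, MeasurableSet C ∧ μ C ≤ a i ∧
      μ {x | ¬ P i C x} ≤ δ i := fun i =>
    by_contra (fun h_bad => i.2 (hs_bad (hP_fin.mem_toFinset.2 h_bad))) (δ i) (hδ_pos i).ne'
  choose C hCm hC_le hC_bad using hP_good
  refine ⟨⋃ i, C i, .iUnion hCm, ?_, ?_⟩
  · calc μ (⋃ i, C i) ≤ ∑' i, μ (C i) := measure_iUnion_le _
      _ ≤ ∑' i : {i // i ∉ s}, a i := ENNReal.tsum_le_tsum hC_le
      _ ≤ η := hs_tail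
  · have h_bad_sum : ∑' i : {i // i ∉ s}, μ {x | ¬ P i (C i) x} ≠ ∞ :=
      ((ENNReal.tsum_le_tsum hC_bad).trans_lt (hδ_sum.trans ENNReal.one_lt_top)).ne
    filter_upwards [ae_finite_setOfPred_mem h_bad_sum] with x hx
    filter_upwards [(hx.image Subtype.val).eventually_cofinite_notMem,
      s.eventually_cofinite_notMem] with i hi his
    refine hP_mono i x (subset_iUnion C ⟨i, his⟩) ?_
    by_contra h_not
    exact hi ⟨⟨i, his⟩, h_not, rfl⟩

lemma map_subtypeVal_cofinite (s : Set ℕ) :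
    map (Subtype.val : s → ℕ) cofinite = atTop ⊓ 𝓟 s := by
  rw [← Subtype.val_injective.comap_cofinite_eq, map_comap_setCoe_val, Nat.cofinite_eq_atTop]

lemma eventually_two_mul_le_of_summable_div {φ : ℕ → ℕ} {s : Set ℕ}
    (hφ : Summable fun n : s => (φ n : ℝ) / n) : ∀ᶠ n in atTop ⊓ 𝓟 s, 2 * φ n ≤ n := by
  have h_small : ∀ᶠ n in atTop ⊓ 𝓟 s, (φ n : ℝ) / n ≤ 1 / 2 := by
    rw [← map_subtypeVal_cofinite, eventually_map]
    exact hφ.tendsto_cofinite_zero.eventually_le_const (by norm_num)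
  filter_upwards [h_small, mem_inf_of_left (eventually_gt_atTop 0)] with n hn hn_pos
  rw [div_le_div_iff₀ (by exact_mod_cast hn_pos) two_pos] at hn
  exact_mod_cast (by linarith : (2 * φ n : ℝ) ≤ n)

lemma exists_measure_le_ae_eventually_hasVisitRun [MeasurableSpace.CountablySeparated X]
    [IsFiniteMeasure μ] {τ : X → X} (hτ : MeasurePreserving τ μ μ)
    (hap : μ (periodicPts τ) = 0) {φ : ℕ → ℕ} {𝒩 : Set ℕ}
    (hφ_pos : ∀ᶠ n in atTop ⊓ 𝓟 𝒩, 0 < φ n) (hφ : Summable fun n : 𝒩 => (φ n : ℝ) / n)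
    {η : ℝ≥0∞} (hη : η ≠ 0) :
    ∃ B, MeasurableSet B ∧ μ B ≤ η ∧
      ∀ᵐ x ∂μ, ∀ᶠ n in atTop ⊓ 𝓟 𝒩, HasVisitRun τ B n (φ n) x := by
  have h_sum : ∑' n : 𝒩, 8 * μ univ * ENNReal.ofReal (φ n / n) ≠ ∞ := by
    rw [ENNReal.tsum_mul_left]
    exact ENNReal.mul_ne_top (ENNReal.mul_ne_top (by simp) (measure_ne_top μ _))
      hφ.tsum_ofReal_ne_top
  have h_good : ∀ᶠ n in atTop ⊓ 𝓟 𝒩, 0 < φ n ∧ 2 * φ n ≤ n :=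
    hφ_pos.and (eventually_two_mul_le_of_summable_div hφ)
  simp only [← map_subtypeVal_cofinite, eventually_map] at h_good ⊢
  exact exists_measure_le_ae_eventually_of_monotone
    (P := fun n : 𝒩 => fun C => HasVisitRun τ C n (φ n)) (fun _ _ _ _ => HasVisitRun.mono)
    h_sum (h_good.mono fun _ hn _ hε =>
      exists_measure_le_div_measure_not_hasVisitRun_le hτ hap hn.1 hn.2 hε) hη

end Selection

section WeightedErgodicSum

/-- The weighted ergodic sum `A_n f(x) = ∑_{h=1}^n w_h f(τ^h x)`. -/
def weightedErgodicSum {X : Type*} (w : ℕ → ℝ) (τ : X → X) (f : X → ℝ) (n : ℕ) (x : X) : ℝ :=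
  ∑ h ∈ Finset.Icc 1 n, w h * f (τ^[h] x)

variable {X : Type*} {w : ℕ → ℝ} {τ : X → X} {B : Set X}

lemma HasVisitRun.le_weightedErgodicSum {n p : ℕ} {x : X} (hx : HasVisitRun τ B n p x)
    (hw : ∀ k, 0 ≤ w k) {M : ℝ}
    (hM : ∀ h, 1 ≤ h → h + p ≤ n → M ≤ ∑ k ∈ Finset.Icc h (h + p), w k) :
    M ≤ weightedErgodicSum w τ (B.indicator fun _ => 1) n x := by
  obtain ⟨h, h_pos, h_le, hB⟩ := hx
  calc M ≤ ∑ k ∈ Finset.Icc h (h + p), w k := hM h h_pos h_le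
    _ = ∑ k ∈ Finset.Icc h (h + p), w k * B.indicator (fun _ => 1) (τ^[k] x) :=
        Finset.sum_congr rfl fun k hk => by rw [indicator_of_mem (hB k hk), mul_one]
    _ ≤ weightedErgodicSum w τ (B.indicator fun _ => 1) n x :=
        Finset.sum_le_sum_of_subset_of_nonneg (Finset.Icc_subset_Icc h_pos h_le) fun k _ _ =>
          mul_nonneg (hw k) (indicator_nonneg (fun _ _ => zero_le_one) _)

lemma ae_weightedErgodicSum_indicator_eq_zero [MeasurableSpace X] {μ : Measure X}
    (hτ : Measure.QuasiMeasurePreserving τ μ μ) (hB : μ B = 0) :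
    ∀ᵐ x ∂μ, ∀ n, weightedErgodicSum w τ (B.indicator fun _ => 1) n x = 0 := by
  have h_avoid : ∀ᵐ x ∂μ, ∀ h : ℕ, τ^[h] x ∉ B :=
    ae_all_iff.2 fun h => (hτ.iterate h).ae (measure_eq_zero_iff_ae_notMem.1 hB)
  filter_upwards [h_avoid] with x hx n
  exact Finset.sum_eq_zero fun h _ => by rw [indicator_of_notMem (hx h), mul_zero]

lemma measure_pos_of_ae_tendsto_weightedErgodicSum_atTop [MeasurableSpace X] {μ : Measure X}
    [NeZero μ] (hτ : Measure.QuasiMeasurePreserving τ μ μ) {l : Filter ℕ} [NeBot l]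
    (hB : ∀ᵐ x ∂μ, Tendsto (weightedErgodicSum w τ (B.indicator fun _ => 1) · x) l atTop) :
    0 < μ B := by
  refine pos_of_ne_zero fun hB_null => ?_
  obtain ⟨x, hx, hx_zero⟩ :=
    (hB.and (ae_weightedErgodicSum_indicator_eq_zero (w := w) hτ hB_null)).exists
  simp only [hx_zero] at hx
  exact not_tendsto_const_atTop 0 l hx

lemma eventually_pos_of_eventually_le_sum_Icc {φ : ℕ → ℕ} {𝒩 : Set ℕ}
    (hΔ : ∀ M : ℝ, ∀ᶠ n in atTop ⊓ 𝓟 𝒩,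
      ∀ h : ℕ, 1 ≤ h → h ≤ n - φ n → M ≤ ∑ k ∈ Finset.Icc h (h + φ n), w k) :
    ∀ᶠ n in atTop ⊓ 𝓟 𝒩, 0 < φ n := by
  filter_upwards [hΔ (w 1 + 1), mem_inf_of_left (eventually_ge_atTop 1)] with n hn hn_pos
  refine Nat.pos_of_ne_zero fun hφn => ?_
  have h_le : w 1 + 1 ≤ w 1 := by simpa [hφn] using hn 1 le_rfl (by omega)
  linarith

end WeightedErgodicSum

theorem weighted_sums_divergence_general
    {X : Type*} [MeasurableSpace X] [MeasurableSpace.CountablySeparated X]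
    {μ : Measure X} [IsFiniteMeasure μ] [NeZero μ]
    {τ : X → X} (hτ : MeasurePreserving τ μ μ) (hap : μ (periodicPts τ) = 0)
    {w : ℕ → ℝ} (hw : ∀ k, 0 ≤ w k) {φ : ℕ → ℕ} {𝒩 : Set ℕ} (h𝒩 : 𝒩.Infinite)
    (ha : ∀ M : ℝ, ∀ᶠ n in atTop ⊓ 𝓟 𝒩,
      ∀ h : ℕ, 1 ≤ h → h ≤ n - φ n → M ≤ ∑ k ∈ Finset.Icc h (h + φ n), w k)
    (hb : Summable fun n : 𝒩 => (φ n : ℝ) / n) {η : ℝ≥0∞} (hη : η ≠ 0) :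
    ∃ B : Set X, MeasurableSet B ∧ 0 < μ B ∧ μ B ≤ η ∧
      ∀ᵐ x ∂μ, Tendsto (weightedErgodicSum w τ (B.indicator fun _ => 1) · x)
        (atTop ⊓ 𝓟 𝒩) atTop := by
  have : NeBot (atTop ⊓ 𝓟 𝒩) := Nat.cofinite_eq_atTop ▸ h𝒩.cofinite_inf_principal_neBot
  obtain ⟨B, hBm, hB_le, hB_run⟩ := exists_measure_le_ae_eventually_hasVisitRun hτ hap
    (eventually_pos_of_eventually_le_sum_Icc ha) hb hη
  have h_tendsto : ∀ᵐ x ∂μ, Tendsto (weightedErgodicSum w τ (B.indicator fun _ => 1) · x)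
      (atTop ⊓ 𝓟 𝒩) atTop := by
    filter_upwards [hB_run] with x hx
    refine tendsto_atTop.2 fun M => ?_
    filter_upwards [hx, ha M] with n hn_run hΔ
    exact hn_run.le_weightedErgodicSum hw fun h h_pos h_le => hΔ h h_pos (by omega)
  exact ⟨B, hBm, measure_pos_of_ae_tendsto_weightedErgodicSum_atTop hτ.quasiMeasurePreserving
    h_tendsto, hB_le, h_tendsto⟩

/-- **Theorem 6.3 of the paper** (divergence criterion for weighted ergodic sums).
Let `τ` be an aperiodic invertible measure-preserving transformation of a standard probability
space, `{w_k}` nonnegative reals and `A_n f = ∑_{h=1}^n w_h f ∘ τ^h`.  If `φ(n) → ∞`,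
`∑_{n ∈ 𝒩} φ(n)/n < ∞` and `Δ_n = min_{1 ≤ h ≤ n-φ(n)} ∑_{k=h}^{h+φ(n)} w_k → ∞` along `𝒩`,
then for every `η > 0` there is a measurable set `B` with `0 < μ(B) ≤ η` such that
`limsup_{𝒩 ∋ n → ∞} A_n(χ_B) = ∞` almost surely (both the divergence of `Δ_n` and the `limsup`
statement are expressed in the equivalent "eventually/frequently" forms). -/
theorem weighted_sums_divergence
    {X : Type*} [MeasurableSpace X] [StandardBorelSpace X]
    (μ : Measure X) [IsProbabilityMeasure μ]
    (τ : X ≃ᵐ X) (hτ : MeasurePreserving τ μ μ)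
    (hτ_aperiodic : ∀ n : ℕ, 1 ≤ n → μ {x | (τ : X → X)^[n] x = x} = 0)
    (w : ℕ → ℝ) (hw : ∀ k, 0 ≤ w k)
    (φ : ℕ → ℕ) (hφ : Tendsto φ atTop atTop)
    (𝒩 : Set ℕ) (h𝒩 : 𝒩.Infinite)
    -- condition (a): `Δ_n → ∞` along `𝒩`
    (ha : ∀ M : ℝ, ∀ᶠ n in (atTop ⊓ Filter.principal 𝒩),
      ∀ h : ℕ, 1 ≤ h → h ≤ n - φ n → M ≤ ∑ k ∈ Finset.Icc h (h + φ n), w k)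
    -- condition (b)
    (hb : Summable (fun m : 𝒩 => (φ m : ℝ) / (m : ℝ))) :
    ∀ η : ℝ, 0 < η →
      ∃ B : Set X, MeasurableSet B ∧ 0 < μ B ∧ μ B ≤ ENNReal.ofReal η ∧
        ∀ᵐ x ∂μ, ∀ M : ℝ,
          ∃ᶠ n in (atTop ⊓ Filter.principal 𝒩),
            M < ∑ h ∈ Finset.Icc 1 n, w h * B.indicator (fun _ => (1:ℝ)) ((τ : X → X)^[h] x) := by
  intro η hη
  have : NeBot (atTop ⊓ 𝓟 𝒩) := Nat.cofinite_eq_atTop ▸ h𝒩.cofinite_inf_principal_neBot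
  obtain ⟨B, hBm, hB_pos, hB_le, hB⟩ := weighted_sums_divergence_general hτ
    (measure_periodicPts_eq_zero_iff.2 hτ_aperiodic) hw h𝒩 ha hb (ENNReal.ofReal_pos.2 hη).ne'
  exact ⟨B, hBm, hB_pos, hB_le, hB.mono fun x hx M => (hx.eventually_gt_atTop M).frequently⟩
end
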